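/- arXiv:2303.14563 — 4 statements merged into one kernel-verified Lean document; each statement's English description precedes it below -/
import Mathlib

section
/- Let N ≥ 3, α > 0, p = N/(N-2), u₀, u₁ ∈ L¹_loc(Ω^c), and let f ∈ L¹(∂Ω) satisfy ∫_{∂Ω} f dσ > 0. Then the exterior Robin wave problem u_tt - Δu = |u|^p in Q, ∂u/∂ν + αu = f on Γ, u(0,·) = u₀, u_t(0,·) = u₁, possesses no global in time weak solution. -/
/-!
The proof is the test function method with a logarithmic cutoff, as the exponent `p = N / (N - 2)` is
critical. The test function is
`φ(t, x) = E(2 t / T - 1) * H(x) * E(log ‖x‖ / L)`, where `H(x) = (N-2+α)/α - ‖x‖ ^ (2-N)` is harmonic,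
satisfies the homogeneous Robin condition and is bounded below by a positive constant on `‖x‖ ≥ 1`, and
`E` is the `N`-th power of a smooth bump function. That power makes `E'` and `E''` bounded by a
multiple of `E ^ (1 / p)` (`exists_cutoff`).

In the variable `ρ = log ‖x‖` the Laplacian of a radial function `P(ρ)` is
`(P'' + (N - 2) P') / ‖x‖ ^ 2` (`lap_comp_log_norm`); since `H` is harmonic, only terms carrying a
derivative of the cutoff survive, hence `|Δφ| ≤ C / (L ‖x‖ ^ 2)` times the cutoffs to the power `1 / p`
(`abs_lap_le`). With `T = exp (2 L)` the second time derivative obeys the same bound (`abs_dtt_le`).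
Young's inequality with the conjugate exponent `N / 2` (`young_pointwise`) absorbs `|u| ^ p φ` and leaves
`C L ^ (-N/2) ‖x‖ ^ (-N)` on `(0, T) × {1 ≤ ‖x‖ ≤ exp L}`, whose integral is `C T L ^ (1 - N/2)`. The
data at `t = 0` do not contribute, and the boundary term is at least a constant times `T ∫ f`, so `∫ f`
is at most a constant times `L ^ (1 - N/2)` (`flux_le`), which tends to `0` because `N ≥ 3`.
-/

open MeasureTheory Real Set

noncomputable section

/-- Euclidean space `ℝ^N`. -/
abbrev Euc (N : ℕ) := EuclideanSpace ℝ (Fin N)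

/-- The Laplace operator: the trace of the Hessian, computed as the sum of second
directional derivatives along the standard orthonormal basis. -/
noncomputable def lap {N : ℕ} (f : Euc N → ℝ) (x : Euc N) : ℝ :=
  ∑ i : Fin N,
    fderiv ℝ (fun y => fderiv ℝ f y (EuclideanSpace.single i 1)) x (EuclideanSpace.single i 1)

/-- The exterior domain `Ω^c = ℝ^N \ B(0,1) = {x : |x| ≥ 1}` (closed complement of the
open unit ball). -/
def extDom (N : ℕ) : Set (Euc N) := {x | 1 ≤ ‖x‖}

/-- The surface measure `σ` on the unit sphere `∂Ω`. -/
noncomputable def sphMeasure (N : ℕ) : Measure (Metric.sphere (0 : Euc N) 1) :=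
  (volume : Measure (Euc N)).toSphere

/-- The harmonic function `H(x) = (N-2+α)/α - |x|^{2-N}`. -/
noncomputable def Hfun (N : ℕ) (α : ℝ) (x : Euc N) : ℝ :=
  ((N : ℝ) - 2 + α) / α - ‖x‖ ^ ((2 : ℝ) - N)

/-- An admissible hyperbolic test function: nonnegative on `[0,∞) × Ω^c`, `C²` in `t`
and `C²` in `x` on `(0,∞) × Ω^c`, continuous on `[0,∞) × Ω^c`, vanishing for large `t`
and large `|x|`, satisfying the Robin boundary condition `∂φ/∂ν + αφ = 0` on
`Γ = (0,∞) × ∂Ω` (with `ν(x) = -x`), and with `φ_t`, `φ_tt`, `Δφ` continuous on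
`[0,∞) × Ω^c`. -/
structure AdmissibleHyperbolic (N : ℕ) (α : ℝ) (φ : ℝ → Euc N → ℝ) : Prop where
  nonneg : ∀ t x, 0 ≤ t → x ∈ extDom N → 0 ≤ φ t x
  contDiff_t : ∀ x ∈ extDom N, ContDiffOn ℝ 2 (fun t => φ t x) (Ioi (0 : ℝ))
  contDiff_x : ∀ t ∈ Ioi (0 : ℝ), ContDiffOn ℝ 2 (φ t) (extDom N)
  cont : ContinuousOn (fun q : ℝ × Euc N => φ q.1 q.2) (Ici (0 : ℝ) ×ˢ extDom N)
  vanish_t : ∃ T > 0, ∀ t, T ≤ t → ∀ x, φ t x = 0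
  vanish_x : ∃ R > 1, ∀ x : Euc N, R ≤ ‖x‖ → ∀ t, φ t x = 0
  robin : ∀ t ∈ Ioi (0 : ℝ), ∀ x : Euc N, ‖x‖ = 1 →
    fderiv ℝ (φ t) x (-x) + α * φ t x = 0
  cont_dt : ContinuousOn (fun q : ℝ × Euc N => deriv (fun s => φ s q.2) q.1)
    (Ici (0 : ℝ) ×ˢ extDom N)
  cont_dtt : ContinuousOn (fun q : ℝ × Euc N => deriv (deriv (fun s => φ s q.2)) q.1)
    (Ici (0 : ℝ) ×ˢ extDom N)
  cont_lap : ContinuousOn (fun q : ℝ × Euc N => lap (φ q.1) q.2) (Ici (0 : ℝ) ×ˢ extDom N)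

/-- A global (in time) weak solution of the exterior Robin wave problem
`u_tt - Δu = |u|^p` in `Q`, `∂u/∂ν + αu = f` on `Γ`, `u(0,·) = u₀`, `u_t(0,·) = u₁`. -/
def IsGlobalWeakSolWave (N : ℕ) (α p : ℝ) (u₀ u₁ f : Euc N → ℝ) (u : ℝ → Euc N → ℝ) : Prop :=
  LocallyIntegrableOn (fun q : ℝ × Euc N => |u q.1 q.2| ^ p) (Ici (0 : ℝ) ×ˢ extDom N) volume ∧
  ∀ φ : ℝ → Euc N → ℝ, AdmissibleHyperbolic N α φ →
    (∫ q in Ioi (0 : ℝ) ×ˢ extDom N, |u q.1 q.2| ^ p * φ q.1 q.2)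
      + (∫ x in extDom N, u₁ x * φ 0 x)
      - (∫ x in extDom N, u₀ x * deriv (fun s => φ s x) 0)
      + (∫ t in Ioi (0 : ℝ),
          ∫ x : Metric.sphere (0 : Euc N) 1, f x * φ t x ∂(sphMeasure N))
    = -(∫ q in Ioi (0 : ℝ) ×ˢ extDom N, u q.1 q.2 * deriv (deriv (fun s => φ s q.2)) q.1)
      - ∫ q in Ioi (0 : ℝ) ×ˢ extDom N, u q.1 q.2 * lap (φ q.1) q.2

/-! ### The Laplacian in logarithmic radial coordinates -/

theorem hasFDerivAt_comp_log_norm {N : ℕ} {P : ℝ → ℝ} {P' : ℝ} {x : Euc N} (hx : x ≠ 0)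
    (hP : HasDerivAt P P' (log ‖x‖)) :
    HasFDerivAt (fun y : Euc N => P (log ‖y‖)) ((P' / ‖x‖ ^ 2) • innerSL ℝ x) x := by
  have hn : ‖x‖ ^ 2 ≠ 0 := by simpa using hx
  have h1 : HasFDerivAt (fun y : Euc N => ‖y‖ ^ 2) ((2 : ℝ) • innerSL ℝ x) x := by
    have h := (hasStrictFDerivAt_norm_sq x).hasFDerivAt
    rwa [← Nat.cast_smul_eq_nsmul ℝ, Nat.cast_ofNat] at h
  have h2 := (h1.log hn).const_mul (1 / 2 : ℝ)
  have he : (fun y : Euc N => (1 / 2 : ℝ) * log (‖y‖ ^ 2)) = fun y => log ‖y‖ := by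
    funext y
    rw [Real.log_pow]; push_cast; ring
  rw [he] at h2
  have h3 := hP.comp_hasFDerivAt x h2
  refine h3.congr_fderiv ?_
  ext v
  simp
  field_simp

theorem lap_comp_log_norm {N : ℕ} {P P' P'' : ℝ → ℝ} (hP : ∀ s, HasDerivAt P (P' s) s)
    (hP' : ∀ s, HasDerivAt P' (P'' s) s) {x : Euc N} (hx : x ≠ 0) :
    lap (fun y : Euc N => P (log ‖y‖)) x
      = (P'' (log ‖x‖) + ((N : ℝ) - 2) * P' (log ‖x‖)) / ‖x‖ ^ 2 := by
  have hn : ‖x‖ ^ 2 ≠ 0 := by simpa using hx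
  have key : ∀ i : Fin N,
      fderiv ℝ (fun y => fderiv ℝ (fun y : Euc N => P (log ‖y‖)) y (EuclideanSpace.single i 1)) x
        (EuclideanSpace.single i 1)
      = (P'' (log ‖x‖) - 2 * P' (log ‖x‖)) / (‖x‖ ^ 2) ^ 2 * (x i) ^ 2
        + P' (log ‖x‖) / ‖x‖ ^ 2 := by
    intro i
    have hev : (fun y => fderiv ℝ (fun y : Euc N => P (log ‖y‖)) y (EuclideanSpace.single i 1))
        =ᶠ[nhds x] fun y => P' (log ‖y‖) * ((‖y‖ ^ 2)⁻¹ * y i) := by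
      filter_upwards [isOpen_ne.mem_nhds hx] with y hy
      rw [(hasFDerivAt_comp_log_norm hy (hP _)).fderiv]
      simp [EuclideanSpace.inner_single_right]
      ring
    rw [hev.fderiv_eq]
    have h1 : HasFDerivAt (fun y : Euc N => ‖y‖ ^ 2) ((2 : ℝ) • innerSL ℝ x) x := by
      have h := (hasStrictFDerivAt_norm_sq x).hasFDerivAt
      rwa [← Nat.cast_smul_eq_nsmul ℝ, Nat.cast_ofNat] at h
    have h2 := (hasDerivAt_inv hn).comp_hasFDerivAt x h1
    have h3 : HasFDerivAt (fun y : Euc N => y i) (EuclideanSpace.proj i : Euc N →L[ℝ] ℝ) x :=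
      (EuclideanSpace.proj i : Euc N →L[ℝ] ℝ).hasFDerivAt
    have h4 := (hasFDerivAt_comp_log_norm hx (hP' _)).mul (h2.mul h3)
    have h5 : HasFDerivAt (fun y : Euc N => P' (log ‖y‖) * ((‖y‖ ^ 2)⁻¹ * y i)) _ x := h4
    rw [h5.fderiv]
    simp [EuclideanSpace.inner_single_right]
    field_simp
    ring
  unfold lap
  rw [Finset.sum_congr rfl fun i _ => key i]
  have hs : ∑ i, (x i) ^ 2 = ‖x‖ ^ 2 := by
    rw [EuclideanSpace.real_norm_sq_eq]
  rw [Finset.sum_add_distrib, ← Finset.mul_sum, hs]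
  simp only [Finset.sum_const, Finset.card_univ, Fintype.card_fin, nsmul_eq_mul]
  field_simp
  ring

/-! ### The cutoff -/

/-- `E` is a `C²` cutoff on `ℝ`, equal to `1` on `[-1/2, 1/2]` and to `0` off `(-1, 1)`, with
derivatives `E₁`, `E₂` that are controlled by `E ^ (1 / p)`. The last two bounds are what allows the
test function to be absorbed by Young's inequality where `E` is small. -/
structure IsCutoff (p K : ℝ) (E E₁ E₂ : ℝ → ℝ) : Prop where
  contDiff : ContDiff ℝ 2 E
  hasDeriv : ∀ s, HasDerivAt E (E₁ s) s
  hasDeriv₁ : ∀ s, HasDerivAt E₁ (E₂ s) s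
  cont₂ : Continuous E₂
  nonneg : ∀ s, 0 ≤ E s
  le_one : ∀ s, E s ≤ 1
  eq_one : ∀ s, |s| ≤ 1 / 2 → E s = 1
  eq_zero : ∀ s, 1 ≤ |s| → E s = 0
  deriv_zero : E₁ 0 = 0
  bound₁ : ∀ s, |E₁ s| ≤ K * E s ^ (1 / p)
  bound₂ : ∀ s, |E₂ s| ≤ K * E s ^ (1 / p)

theorem exists_cutoff (N : ℕ) (hN : 3 ≤ N) (p : ℝ) (hp : p = (N : ℝ) / ((N : ℝ) - 2)) :
    ∃ (E E₁ E₂ : ℝ → ℝ) (K : ℝ), 0 < K ∧ IsCutoff p K E E₁ E₂ := by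
  let B : ContDiffBump (0 : ℝ) := ⟨1 / 2, 1, by norm_num, by norm_num⟩
  have hB : ContDiff ℝ 3 (B : ℝ → ℝ) := B.contDiff
  have hB1 : ContDiff ℝ 2 (deriv (B : ℝ → ℝ)) :=
    ((contDiff_succ_iff_deriv (n := 2)).1 (by norm_num; exact hB)).2.2
  have hB2 : ContDiff ℝ 1 (deriv (deriv (B : ℝ → ℝ))) :=
    ((contDiff_succ_iff_deriv (n := 1)).1 (by norm_num; exact hB1)).2.2
  have d0 : ∀ s, HasDerivAt (B : ℝ → ℝ) (deriv B s) s := fun s =>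
    ((hB.differentiable (by norm_num)) s).hasDerivAt
  have d1 : ∀ s, HasDerivAt (deriv (B : ℝ → ℝ)) (deriv (deriv B) s) s := fun s =>
    ((hB1.differentiable (by norm_num)) s).hasDerivAt
  obtain ⟨K1, hK1⟩ := B.hasCompactSupport.deriv.exists_bound_of_continuous hB1.continuous
  obtain ⟨K2, hK2⟩ := B.hasCompactSupport.deriv.deriv.exists_bound_of_continuous hB2.continuous
  have hK1' : ∀ s, |deriv (B : ℝ → ℝ) s| ≤ K1 := hK1
  have hK2' : ∀ s, |deriv (deriv (B : ℝ → ℝ)) s| ≤ K2 := hK2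
  have hK10 : 0 ≤ K1 := (abs_nonneg _).trans (hK1' 0)
  have hK20 : 0 ≤ K2 := (abs_nonneg _).trans (hK2' 0)
  obtain ⟨m, rfl⟩ : ∃ m, N = m + 2 := ⟨N - 2, by omega⟩
  have hm : (1 : ℝ) ≤ m := by exact_mod_cast (by omega : 1 ≤ m)
  -- `(B ^ N) ^ (1 / p) = B ^ (N - 2)`
  have hpow : ∀ s, (B s ^ (m + 2)) ^ (1 / p) = B s ^ m := by
    intro s
    rw [← Real.rpow_natCast, ← Real.rpow_mul B.nonneg, ← Real.rpow_natCast]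
    congr 1
    rw [hp]; push_cast
    field_simp
    ring
  refine ⟨fun s => B s ^ (m + 2), fun s => (m + 2) * B s ^ (m + 1) * deriv B s,
    fun s => (m + 2) * ((m + 1) * B s ^ m * deriv B s) * deriv B s
      + (m + 2) * B s ^ (m + 1) * deriv (deriv B) s,
    1 + (m + 2) * K1 + (m + 2) * (m + 1) * K1 * K1 + (m + 2) * K2, by positivity,
    ⟨(hB.pow _).of_le (by norm_num), ?_, ?_, ?_, ?_, ?_, ?_, ?_, ?_, ?_, ?_⟩⟩
  · intro s
    refine ((d0 s).fun_pow (m + 2)).congr_deriv ?_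
    push_cast; simp
  · intro s
    refine ((((d0 s).fun_pow (m + 1)).const_mul ((m : ℝ) + 2)).mul (d1 s)).congr_deriv ?_
    push_cast; simp
  · have := hB.continuous
    have := hB1.continuous
    have := hB2.continuous
    fun_prop
  · intro s; exact pow_nonneg B.nonneg _
  · intro s; exact pow_le_one₀ B.nonneg B.le_one
  · intro s hs
    rw [B.one_of_mem_closedBall (by simpa [B, Real.dist_eq] using hs), one_pow]
  · intro s hs
    rw [B.zero_of_le_dist (by simpa [B, Real.dist_eq] using hs)]
    simp
  · have : deriv (B : ℝ → ℝ) 0 = 0 := by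
      rw [B.eventuallyEq_one.deriv_eq]; simp
    simp [this]
  · intro s
    rw [hpow, abs_mul, abs_mul, abs_of_nonneg (pow_nonneg B.nonneg (m + 1)),
      abs_of_nonneg (by positivity : (0 : ℝ) ≤ m + 2)]
    have h0 : 0 ≤ B s ^ m := pow_nonneg B.nonneg m
    have h1 : B s ^ (m + 1) ≤ B s ^ m := pow_le_pow_of_le_one B.nonneg B.le_one (by omega)
    calc (m + 2) * B s ^ (m + 1) * |deriv (B : ℝ → ℝ) s| ≤ (m + 2) * B s ^ m * K1 := by
          gcongr; exact hK1' s
      _ = ((m + 2) * K1) * B s ^ m := by ring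
      _ ≤ _ := by
          gcongr
          have : 0 ≤ (m + 2) * (m + 1) * K1 * K1 := by positivity
          have : 0 ≤ (m + 2) * K2 := by positivity
          linarith
  · intro s
    rw [hpow]
    have h0 : 0 ≤ B s ^ m := pow_nonneg B.nonneg m
    have h1 : B s ^ (m + 1) ≤ B s ^ m := pow_le_pow_of_le_one B.nonneg B.le_one (by omega)
    have h01 : 0 ≤ B s ^ (m + 1) := pow_nonneg B.nonneg _
    refine (abs_add_le _ _).trans ?_
    simp only [abs_mul, abs_of_nonneg h0, abs_of_nonneg h01,
      abs_of_nonneg (by positivity : (0 : ℝ) ≤ m + 2),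
      abs_of_nonneg (by positivity : (0 : ℝ) ≤ m + 1)]
    calc (m + 2) * ((m + 1) * B s ^ m * |deriv (B : ℝ → ℝ) s|) * |deriv (B : ℝ → ℝ) s|
          + (m + 2) * B s ^ (m + 1) * |deriv (deriv (B : ℝ → ℝ)) s|
        ≤ (m + 2) * ((m + 1) * B s ^ m * K1) * K1 + (m + 2) * B s ^ m * K2 := by
          gcongr <;> first | exact hK1' s | exact hK2' s
      _ = ((m + 2) * (m + 1) * K1 * K1 + (m + 2) * K2) * B s ^ m := by ring
      _ ≤ _ := by
          gcongr
          have : 0 ≤ (m + 2) * K1 := by positivity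
          linarith

/-! ### The test function -/

theorem ne_zero_of_mem_extDom {N : ℕ} {x : Euc N} (hx : x ∈ extDom N) : x ≠ 0 := by
  rintro rfl
  simp [extDom] at hx
  linarith

theorem log_norm_nonneg {N : ℕ} {x : Euc N} (hx : x ∈ extDom N) : 0 ≤ log ‖x‖ :=
  Real.log_nonneg hx

theorem continuousOn_log_norm (N : ℕ) : ContinuousOn (fun x : Euc N => log ‖x‖) (extDom N) :=
  continuous_norm.continuousOn.log fun _ hx => norm_ne_zero_iff.2 (ne_zero_of_mem_extDom hx)

/-- The radial profile, in the variable `ρ = log ‖x‖`, of the product of the harmonic function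
`c - ‖x‖ ^ (-m)` with the cutoff `E (log ‖x‖ / L)`. -/
def prof (c m L : ℝ) (E : ℝ → ℝ) (ρ : ℝ) : ℝ := (c - exp (-m * ρ)) * E (ρ / L)

/-- First derivative of `prof`. -/
def prof₁ (c m L : ℝ) (E E₁ : ℝ → ℝ) (ρ : ℝ) : ℝ :=
  m * exp (-m * ρ) * E (ρ / L) + (c - exp (-m * ρ)) * (E₁ (ρ / L) / L)

/-- Second derivative of `prof`. -/
def prof₂ (c m L : ℝ) (E E₁ E₂ : ℝ → ℝ) (ρ : ℝ) : ℝ :=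
  -m ^ 2 * exp (-m * ρ) * E (ρ / L) + 2 * m * exp (-m * ρ) * (E₁ (ρ / L) / L)
    + (c - exp (-m * ρ)) * (E₂ (ρ / L) / L ^ 2)

theorem hasDerivAt_prof {p K : ℝ} {E E₁ E₂ : ℝ → ℝ} (hE : IsCutoff p K E E₁ E₂) (c m L ρ : ℝ) :
    HasDerivAt (prof c m L E) (prof₁ c m L E E₁ ρ) ρ := by
  have h1 : HasDerivAt (fun ρ => exp (-m * ρ)) (exp (-m * ρ) * -m) ρ := by
    simpa using ((hasDerivAt_id ρ).const_mul (-m)).exp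
  have h2 : HasDerivAt (fun ρ => E (ρ / L)) (E₁ (ρ / L) * (1 / L)) ρ :=
    (hE.hasDeriv (ρ / L)).comp ρ ((hasDerivAt_id ρ).div_const L)
  refine ((h1.const_sub c).mul h2).congr_deriv ?_
  simp only [prof₁]
  ring

theorem hasDerivAt_prof₁ {p K : ℝ} {E E₁ E₂ : ℝ → ℝ} (hE : IsCutoff p K E E₁ E₂) (c m L ρ : ℝ) :
    HasDerivAt (prof₁ c m L E E₁) (prof₂ c m L E E₁ E₂ ρ) ρ := by
  have h1 : HasDerivAt (fun ρ => exp (-m * ρ)) (exp (-m * ρ) * -m) ρ := by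
    simpa using ((hasDerivAt_id ρ).const_mul (-m)).exp
  have h2 : HasDerivAt (fun ρ => E (ρ / L)) (E₁ (ρ / L) * (1 / L)) ρ :=
    (hE.hasDeriv (ρ / L)).comp ρ ((hasDerivAt_id ρ).div_const L)
  have h3 : HasDerivAt (fun ρ => E₁ (ρ / L)) (E₂ (ρ / L) * (1 / L)) ρ :=
    (hE.hasDeriv₁ (ρ / L)).comp ρ ((hasDerivAt_id ρ).div_const L)
  refine (((h1.const_mul m).mul h2).add ((h1.const_sub c).mul (h3.div_const L))).congr_deriv ?_
  simp only [prof₂]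
  ring

/-- The product of the harmonic function `(N-2+α)/α - ‖x‖ ^ (2-N)`, of a logarithmic cutoff at radius
`exp L` and of a cutoff in time supported in `[0, T]`. -/
def testFun (N : ℕ) (α T L : ℝ) (E : ℝ → ℝ) (t : ℝ) (x : Euc N) : ℝ :=
  E (2 * t / T - 1) * prof (((N : ℝ) - 2 + α) / α) ((N : ℝ) - 2) L E (log ‖x‖)

section TestFunction

variable {N : ℕ} {α p K T L : ℝ} {E E₁ E₂ : ℝ → ℝ}

theorem deriv_testFun (hE : IsCutoff p K E E₁ E₂) (x : Euc N) :
    deriv (fun s => testFun N α T L E s x) = fun t => E₁ (2 * t / T - 1) * (2 / T)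
      * prof (((N : ℝ) - 2 + α) / α) ((N : ℝ) - 2) L E (log ‖x‖) := by
  funext t
  have h : HasDerivAt (fun t : ℝ => 2 * t / T - 1) (2 / T) t := by
    simpa using (((hasDerivAt_id t).const_mul (2 : ℝ)).div_const T).sub_const (1 : ℝ)
  exact (((hE.hasDeriv _).comp t h).mul_const _).deriv

theorem deriv_deriv_testFun (hE : IsCutoff p K E E₁ E₂) (x : Euc N) :
    deriv (deriv (fun s => testFun N α T L E s x)) = fun t => E₂ (2 * t / T - 1) * (2 / T) ^ 2
      * prof (((N : ℝ) - 2 + α) / α) ((N : ℝ) - 2) L E (log ‖x‖) := by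
  rw [deriv_testFun hE]
  funext t
  have h : HasDerivAt (fun t : ℝ => 2 * t / T - 1) (2 / T) t := by
    simpa using (((hasDerivAt_id t).const_mul (2 : ℝ)).div_const T).sub_const (1 : ℝ)
  refine ((((hE.hasDeriv₁ _).comp t h).mul_const (2 / T)).mul_const _).deriv.trans ?_
  ring

/-- The contributions without a derivative of the cutoff cancel, the factor
`(N-2+α)/α - ‖x‖ ^ (2-N)` being harmonic. -/
theorem lap_testFun (hE : IsCutoff p K E E₁ E₂) (t : ℝ) {x : Euc N} (hx : x ≠ 0) :
    lap (testFun N α T L E t) x = E (2 * t / T - 1)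
      * (2 * ((N : ℝ) - 2) * exp (-((N : ℝ) - 2) * log ‖x‖) * (E₁ (log ‖x‖ / L) / L)
        + (((N : ℝ) - 2 + α) / α - exp (-((N : ℝ) - 2) * log ‖x‖)) * (E₂ (log ‖x‖ / L) / L ^ 2)
        + ((N : ℝ) - 2) * (((N : ℝ) - 2 + α) / α - exp (-((N : ℝ) - 2) * log ‖x‖))
          * (E₁ (log ‖x‖ / L) / L)) / ‖x‖ ^ 2 := by
  have h := lap_comp_log_norm
    (P := fun ρ => E (2 * t / T - 1) * prof (((N : ℝ) - 2 + α) / α) ((N : ℝ) - 2) L E ρ)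
    (fun s => (hasDerivAt_prof hE _ _ _ s).const_mul _)
    (fun s => (hasDerivAt_prof₁ hE _ _ _ s).const_mul _) hx
  refine h.trans ?_
  simp only [prof₁, prof₂]
  ring

theorem time_eq_zero (hE : IsCutoff p K E E₁ E₂) (hT : 0 < T) {t : ℝ} (ht : t ∉ Ioo 0 T) :
    E (2 * t / T - 1) = 0 := by
  apply hE.eq_zero
  rw [mem_Ioo, not_and_or, not_lt, not_lt] at ht
  rcases ht with ht | ht
  · have : 2 * t / T ≤ 0 := div_nonpos_of_nonpos_of_nonneg (by linarith) hT.le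
    rw [abs_of_nonpos (by linarith)]; linarith
  · have : 2 ≤ 2 * t / T := by rw [le_div_iff₀ hT]; linarith
    rw [abs_of_nonneg (by linarith)]; linarith

theorem space_eq_zero (hE : IsCutoff p K E E₁ E₂) (hL : 0 < L) {r : ℝ} (hr : exp L ≤ r) :
    E (log r / L) = 0 := by
  apply hE.eq_zero
  have h : L ≤ log r := (Real.le_log_iff_exp_le ((exp_pos L).trans_le hr)).2 hr
  exact (by rwa [le_div_iff₀ hL, one_mul] : 1 ≤ log r / L).trans (le_abs_self _)

theorem admissible_testFun (hN : 3 ≤ N) (hα : 0 < α) (hT : 0 < T) (hL : 0 < L)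
    (hE : IsCutoff p K E E₁ E₂) : AdmissibleHyperbolic N α (testFun N α T L E) := by
  have hN' : (3 : ℝ) ≤ N := by exact_mod_cast hN
  have hc1 : 1 ≤ ((N : ℝ) - 2 + α) / α := by rw [le_div_iff₀ hα]; linarith
  have hE1 : Continuous E₁ := continuous_iff_continuousAt.2 fun s => (hE.hasDeriv₁ s).continuousAt
  have hE0 : Continuous E := hE.contDiff.continuous
  have hE2 := hE.cont₂
  have hlog : ContinuousOn (fun q : ℝ × Euc N => log ‖q.2‖) (Ici (0 : ℝ) ×ˢ extDom N) :=
    (continuousOn_log_norm N).comp continuousOn_snd fun q hq => hq.2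
  have hprof : Continuous (prof (((N : ℝ) - 2 + α) / α) ((N : ℝ) - 2) L E) := by
    unfold prof; fun_prop
  have hpc : ContDiff ℝ 2 (prof (((N : ℝ) - 2 + α) / α) ((N : ℝ) - 2) L E) := by
    have := hE.contDiff
    unfold prof; fun_prop
  refine ⟨?_, ?_, ?_, ?_, ?_, ?_, ?_, ?_, ?_, ?_⟩
  · intro t x _ hx
    refine mul_nonneg (hE.nonneg _) (mul_nonneg ?_ (hE.nonneg _))
    have : exp (-((N : ℝ) - 2) * log ‖x‖) ≤ 1 := by
      rw [Real.exp_le_one_iff]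
      nlinarith [log_norm_nonneg hx]
    linarith
  · intro x _
    have := hE.contDiff
    unfold testFun
    fun_prop
  · intro t _ x hx
    have h0 := ne_zero_of_mem_extDom hx
    have h1 : ContDiffAt ℝ 2 (fun x : Euc N => log ‖x‖) x :=
      (contDiffAt_norm ℝ h0).log (norm_ne_zero_iff.2 h0)
    exact (contDiffAt_const.mul (hpc.contDiffAt.comp x h1)).contDiffWithinAt
  · unfold testFun
    have := hprof.comp_continuousOn hlog
    refine ContinuousOn.mul ?_ this
    fun_prop
  · refine ⟨T, hT, fun t ht x => ?_⟩
    rw [testFun, time_eq_zero hE hT (fun h => absurd h.2 (not_lt.2 ht)), zero_mul]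
  · refine ⟨exp L, by simpa using hL, fun x hx t => ?_⟩
    rw [testFun, prof, space_eq_zero hE hL hx, mul_zero, mul_zero]
  · intro t _ x hx
    have h0 : x ≠ 0 := by rintro rfl; simp at hx
    have h := hasFDerivAt_comp_log_norm
      (P := fun ρ => E (2 * t / T - 1) * prof (((N : ℝ) - 2 + α) / α) ((N : ℝ) - 2) L E ρ) h0
      ((hasDerivAt_prof hE _ _ _ _).const_mul _)
    have h' : HasFDerivAt (testFun N α T L E t) _ x := h
    rw [h'.fderiv]
    simp [testFun, prof, prof₁, hx, hE.deriv_zero]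
    field_simp
    ring
  · simp only [deriv_testFun hE]
    refine ContinuousOn.mul ?_ (hprof.comp_continuousOn hlog)
    fun_prop
  · simp only [deriv_deriv_testFun hE]
    refine ContinuousOn.mul ?_ (hprof.comp_continuousOn hlog)
    fun_prop
  · refine ContinuousOn.congr ?_ fun q hq => lap_testFun hE q.1 (ne_zero_of_mem_extDom hq.2)
    refine ContinuousOn.div ?_ (by fun_prop) fun q hq =>
      pow_ne_zero _ (norm_ne_zero_iff.2 (ne_zero_of_mem_extDom hq.2))
    refine ContinuousOn.mul (by fun_prop) ?_
    have : Continuous fun ρ : ℝ => 2 * ((N : ℝ) - 2) * exp (-((N : ℝ) - 2) * ρ) * (E₁ (ρ / L) / L)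
        + (((N : ℝ) - 2 + α) / α - exp (-((N : ℝ) - 2) * ρ)) * (E₂ (ρ / L) / L ^ 2)
        + ((N : ℝ) - 2) * (((N : ℝ) - 2 + α) / α - exp (-((N : ℝ) - 2) * ρ))
          * (E₁ (ρ / L) / L) := by fun_prop
    exact this.comp_continuousOn hlog

end TestFunction

/-! ### Young's inequality and the critical weight -/

theorem young_eps {p q δ : ℝ} (hpq : p.HolderConjugate q) (hδ : 0 < δ) {a b : ℝ} (ha : 0 ≤ a)
    (hb : 0 ≤ b) : a * b ≤ δ * a ^ p + δ ^ (-(q / p)) * b ^ q := by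
  have hp := hpq.pos
  have hq := hpq.symm.pos
  have h := Real.young_inequality_of_nonneg (a := δ ^ (1 / p) * a) (b := δ ^ (-(1 / p)) * b)
    (by positivity) (by positivity) hpq
  have e1 : δ ^ (1 / p) * a * (δ ^ (-(1 / p)) * b) = a * b := by
    have : δ ^ (1 / p) * δ ^ (-(1 / p)) = 1 := by rw [← Real.rpow_add hδ]; simp
    linear_combination a * b * this
  have e2 : (δ ^ (1 / p) * a) ^ p = δ * a ^ p := by
    rw [Real.mul_rpow (by positivity) ha, ← Real.rpow_mul hδ.le]
    rw [one_div_mul_cancel hp.ne', Real.rpow_one]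
  have e3 : (δ ^ (-(1 / p)) * b) ^ q = δ ^ (-(q / p)) * b ^ q := by
    rw [Real.mul_rpow (by positivity) hb, ← Real.rpow_mul hδ.le]
    congr 2; ring
  rw [e1, e2, e3] at h
  have h1 : δ * a ^ p / p ≤ δ * a ^ p := div_le_self (by positivity) hpq.lt.le
  have h2 : δ ^ (-(q / p)) * b ^ q / q ≤ δ ^ (-(q / p)) * b ^ q :=
    div_le_self (by positivity) hpq.symm.lt.le
  linarith

/-- The weight `‖x‖ ^ (-N)` truncated to the annulus `1 ≤ ‖x‖ ≤ exp L`, as a function of `r = ‖x‖`. -/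
def annWeight (N : ℕ) (L r : ℝ) : ℝ := (Icc 1 (exp L)).indicator (fun r => (r ^ N)⁻¹) r

theorem annWeight_integrable_and_integral {N : ℕ} (hN : 1 ≤ N) {L : ℝ} (hL : 0 ≤ L) :
    Integrable (fun x : Euc N => annWeight N L ‖x‖) ∧
    ∫ x : Euc N, annWeight N L ‖x‖
      = N * (volume.real (Metric.ball (0 : Euc N) 1) * L) := by
  have : Nonempty (Fin N) := ⟨⟨0, hN⟩⟩
  have hL1 : (1 : ℝ) ≤ exp L := by simpa using hL
  have hfun : ∀ y : ℝ, y ^ (N - 1) • annWeight N L y = (Icc 1 (exp L)).indicator (fun y => y⁻¹) y := by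
    intro y
    unfold annWeight
    by_cases hy : y ∈ Icc 1 (exp L)
    · have hy0 : y ≠ 0 := by have := hy.1; positivity
      rw [indicator_of_mem hy, indicator_of_mem hy, smul_eq_mul]
      obtain ⟨k, rfl⟩ : ∃ k, N = k + 1 := ⟨N - 1, by omega⟩
      simp only [Nat.add_sub_cancel]
      field_simp
      ring
    · rw [indicator_of_notMem hy, indicator_of_notMem hy, smul_zero]
  have hsub : Ioi (0 : ℝ) ∩ Icc 1 (exp L) = Icc 1 (exp L) :=
    inter_eq_right.2 fun y hy => lt_of_lt_of_le one_pos hy.1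
  constructor
  · rw [integrable_fun_norm_addHaar]
    simp only [finrank_euclideanSpace, Fintype.card_fin, hfun]
    rw [integrableOn_indicator_iff measurableSet_Icc, inter_comm, hsub]
    refine ContinuousOn.integrableOn_Icc (continuousOn_inv₀.mono fun y hy => ?_)
    exact (lt_of_lt_of_le one_pos hy.1).ne'
  · rw [integral_fun_norm_addHaar]
    simp only [finrank_euclideanSpace, Fintype.card_fin, hfun, nsmul_eq_mul, smul_eq_mul]
    rw [setIntegral_indicator measurableSet_Icc, hsub, integral_Icc_eq_integral_Ioc,
      ← intervalIntegral.integral_of_le hL1, integral_inv_of_pos one_pos (exp_pos L)]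
    simp

/-! ### Estimates for the test function -/

section Estimates

variable {N : ℕ} {α p K T L : ℝ} {E E₁ E₂ : ℝ → ℝ}

theorem one_lt_const (hN : 3 ≤ N) (hα : 0 < α) : 1 < ((N : ℝ) - 2 + α) / α := by
  have hN' : (3 : ℝ) ≤ N := by exact_mod_cast hN
  rw [lt_div_iff₀ hα]; linarith

theorem exp_weight_mem (hN : 3 ≤ N) {x : Euc N} (hx : x ∈ extDom N) :
    0 ≤ exp (-((N : ℝ) - 2) * log ‖x‖) ∧ exp (-((N : ℝ) - 2) * log ‖x‖) ≤ 1 := by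
  have hN' : (3 : ℝ) ≤ N := by exact_mod_cast hN
  refine ⟨(exp_pos _).le, ?_⟩
  rw [Real.exp_le_one_iff]
  nlinarith [log_norm_nonneg hx]

theorem le_testFun (hN : 3 ≤ N) (hE : IsCutoff p K E E₁ E₂)
    (t : ℝ) {x : Euc N} (hx : x ∈ extDom N) :
    (((N : ℝ) - 2 + α) / α - 1) * (E (2 * t / T - 1) * E (log ‖x‖ / L))
      ≤ testFun N α T L E t x := by
  have h := exp_weight_mem hN hx
  have h1 := hE.nonneg (2 * t / T - 1)
  have h2 := hE.nonneg (log ‖x‖ / L)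
  have h3 : (((N : ℝ) - 2 + α) / α - 1) ≤ ((N : ℝ) - 2 + α) / α - exp (-((N : ℝ) - 2) * log ‖x‖) := by
    linarith [h.2]
  calc _ ≤ (((N : ℝ) - 2 + α) / α - exp (-((N : ℝ) - 2) * log ‖x‖))
        * (E (2 * t / T - 1) * E (log ‖x‖ / L)) := by gcongr
    _ = _ := by rw [testFun, prof]; ring

theorem le_rpow_of_le_one {a : ℝ} (hp : 1 < p) (h0 : 0 ≤ a) (h1 : a ≤ 1) : a ≤ a ^ (1 / p) := by
  refine Real.self_le_rpow_of_le_one h0 h1 ?_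
  rw [div_le_one (by linarith)]; exact hp.le

theorem abs_dtt_le (hN : 3 ≤ N) (hα : 0 < α) (hp : 1 < p) (hK : 0 < K) (hT : 0 < T)
    (hL : 0 < L) (hTL : L * exp (2 * L) ≤ T ^ 2)
    (hE : IsCutoff p K E E₁ E₂) (t : ℝ) {x : Euc N} (hx : x ∈ extDom N) :
    |deriv (deriv (fun s => testFun N α T L E s x)) t|
      ≤ 4 * (((N : ℝ) - 2 + α) / α) * K / (L * ‖x‖ ^ 2)
        * (E (2 * t / T - 1) * E (log ‖x‖ / L)) ^ (1 / p) := by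
  have h := exp_weight_mem hN hx
  have hc := one_lt_const hN hα
  have hx0 : 0 < ‖x‖ := norm_pos_iff.2 (ne_zero_of_mem_extDom hx)
  have h1 := hE.nonneg (2 * t / T - 1)
  have h2 := hE.nonneg (log ‖x‖ / L)
  rw [deriv_deriv_testFun hE, Real.mul_rpow h1 h2]
  simp only [prof]
  rcases le_or_gt (exp L) ‖x‖ with hr | hr
  · rw [space_eq_zero hE hL hr]
    simp only [mul_zero, abs_zero]
    positivity
  set c := ((N : ℝ) - 2 + α) / α
  have hT2 : (2 / T) ^ 2 ≤ 4 / (L * ‖x‖ ^ 2) := by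
    rw [div_pow, show (2 : ℝ) ^ 2 = 4 by norm_num]
    apply div_le_div_of_nonneg_left (by norm_num) (by positivity)
    refine le_trans ?_ hTL
    rw [two_mul, exp_add, ← sq]
    gcongr
  rw [abs_mul, abs_mul, abs_mul, abs_of_nonneg (sq_nonneg (2 / T)), abs_of_nonneg h2,
    abs_of_nonneg (by linarith : 0 ≤ c - exp (-((N : ℝ) - 2) * log ‖x‖))]
  have hb := hE.bound₂ (2 * t / T - 1)
  have hs := le_rpow_of_le_one hp h2 (hE.le_one _)
  calc |E₂ (2 * t / T - 1)| * (2 / T) ^ 2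
        * ((c - exp (-((N : ℝ) - 2) * log ‖x‖)) * E (log ‖x‖ / L))
      ≤ (K * E (2 * t / T - 1) ^ (1 / p)) * (4 / (L * ‖x‖ ^ 2)) * (c * E (log ‖x‖ / L) ^ (1 / p)) := by
        have hce : 0 ≤ c - exp (-((N : ℝ) - 2) * log ‖x‖) := by linarith
        gcongr
        linarith
    _ = _ := by ring

theorem abs_lap_le (hN : 3 ≤ N) (hα : 0 < α) (hp : 1 < p) (hK : 0 < K) (hL : 1 ≤ L)
    (hE : IsCutoff p K E E₁ E₂) (t : ℝ) {x : Euc N} (hx : x ∈ extDom N) :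
    |lap (testFun N α T L E t) x|
      ≤ (2 * ((N : ℝ) - 2) + ((N : ℝ) - 2 + α) / α + ((N : ℝ) - 2) * (((N : ℝ) - 2 + α) / α)) * K
          / (L * ‖x‖ ^ 2) * (E (2 * t / T - 1) * E (log ‖x‖ / L)) ^ (1 / p) := by
  have h := exp_weight_mem hN hx
  have hc := one_lt_const hN hα
  have hx0 : 0 < ‖x‖ := norm_pos_iff.2 (ne_zero_of_mem_extDom hx)
  have h1 := hE.nonneg (2 * t / T - 1)
  have h2 := hE.nonneg (log ‖x‖ / L)
  have hm : (0 : ℝ) ≤ (N : ℝ) - 2 := by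
    have : (3 : ℝ) ≤ N := by exact_mod_cast hN
    linarith
  rw [lap_testFun hE t (ne_zero_of_mem_extDom hx), Real.mul_rpow h1 h2]
  set c := ((N : ℝ) - 2 + α) / α
  set m := (N : ℝ) - 2
  set e := exp (-m * log ‖x‖)
  set w := E (log ‖x‖ / L) ^ (1 / p)
  have hw : 0 ≤ w := by positivity
  have hL0 : 0 < L := by linarith
  have hb1 : |E₁ (log ‖x‖ / L) / L| ≤ K * w / L := by
    rw [abs_div, abs_of_pos hL0]
    gcongr
    exact hE.bound₁ _
  have hb2 : |E₂ (log ‖x‖ / L) / L ^ 2| ≤ K * w / L := by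
    rw [abs_div, abs_of_pos (by positivity : 0 < L ^ 2)]
    gcongr
    · exact hE.bound₂ _
    · nlinarith
  have hce : 0 ≤ c - e := by linarith
  have hce' : c - e ≤ c := by linarith
  have hin : |2 * m * e * (E₁ (log ‖x‖ / L) / L) + (c - e) * (E₂ (log ‖x‖ / L) / L ^ 2)
      + m * (c - e) * (E₁ (log ‖x‖ / L) / L)| ≤ (2 * m + c + m * c) * (K * w / L) := by
    refine (abs_add_le _ _).trans ((add_le_add (abs_add_le _ _) le_rfl).trans ?_)
    rw [abs_mul _ (E₁ _ / L), abs_mul _ (E₂ _ / _), abs_mul _ (E₁ _ / L),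
      abs_of_nonneg (by have := h.1; positivity : 0 ≤ 2 * m * e), abs_of_nonneg hce,
      abs_of_nonneg (by positivity : 0 ≤ m * (c - e))]
    calc _ ≤ 2 * m * 1 * (K * w / L) + c * (K * w / L) + m * c * (K * w / L) := by
          gcongr
          exact h.2
      _ = _ := by ring
  rw [abs_div, abs_mul, abs_of_nonneg h1, abs_of_pos (by positivity : 0 < ‖x‖ ^ 2)]
  have hs := le_rpow_of_le_one hp h1 (hE.le_one _)
  have hC : 0 ≤ (2 * m + c + m * c) * (K * w / L) := (abs_nonneg _).trans hin
  calc _ ≤ E (2 * t / T - 1) ^ (1 / p) * ((2 * m + c + m * c) * (K * w / L)) / ‖x‖ ^ 2 := by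
        gcongr
    _ = _ := by field_simp

/-- Weighted Young inequality for one term on the right of the weak formulation. A derivative `G` of
the test function is bounded through the cutoff to the power `1 / p`, so half of `|v| ^ p` times the
test function absorbs `|v|`, and the critical exponent turns the rest into `‖x‖ ^ (-N)`. -/
theorem young_pointwise (hN : 3 ≤ N) (hα : 0 < α) (hp : p = (N : ℝ) / ((N : ℝ) - 2))
    (hT : 0 < T) (hL : 0 < L) (hE : IsCutoff p K E E₁ E₂) {C : ℝ} (hC : 0 ≤ C) (v G t : ℝ)
    {x : Euc N} (hx : x ∈ extDom N)
    (hG : |G| ≤ C / (L * ‖x‖ ^ 2) * (E (2 * t / T - 1) * E (log ‖x‖ / L)) ^ (1 / p)) :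
    ‖v * G‖ ≤ 1 / 2 * (|v| ^ p * testFun N α T L E t x)
      + ((((N : ℝ) - 2 + α) / α - 1) / 2) ^ (-((N : ℝ) / 2 / p)) * C ^ ((N : ℝ) / 2)
        * L ^ (-((N : ℝ) / 2)) * ((Ioo 0 T).indicator (fun _ => (1 : ℝ)) t * annWeight N L ‖x‖) := by
  have hN' : (3 : ℝ) ≤ N := by exact_mod_cast hN
  have hpq : p.HolderConjugate ((N : ℝ) / 2) := by
    rw [Real.holderConjugate_iff, hp]
    constructor
    · rw [lt_div_iff₀ (by linarith)]; linarith
    · rw [inv_div, inv_div]; field_simp; ring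
  have hp0 := hpq.pos
  have hx0 : 0 < ‖x‖ := norm_pos_iff.2 (ne_zero_of_mem_extDom hx)
  have h1 := hE.nonneg (2 * t / T - 1)
  have h2 := hE.nonneg (log ‖x‖ / L)
  have hc := one_lt_const hN hα
  have hle := le_testFun (α := α) (T := T) (L := L) hN hE t hx
  set W := E (2 * t / T - 1) * E (log ‖x‖ / L) with hW
  have hW0 : 0 ≤ W := mul_nonneg h1 h2
  set δ := (((N : ℝ) - 2 + α) / α - 1) / 2 with hδdef
  have hδ : 0 < δ := by rw [hδdef]; linarith
  rw [Real.norm_eq_abs, abs_mul]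
  have hW' : 0 ≤ W ^ (1 / p) := by positivity
  have hφ : δ * (|v| * W ^ (1 / p)) ^ p ≤ 1 / 2 * (|v| ^ p * testFun N α T L E t x) := by
    rw [Real.mul_rpow (abs_nonneg _) hW', ← Real.rpow_mul hW0, one_div_mul_cancel hp0.ne',
      Real.rpow_one]
    have hv : 0 ≤ |v| ^ p := by positivity
    calc δ * (|v| ^ p * W) = 1 / 2 * (|v| ^ p * ((((N : ℝ) - 2 + α) / α - 1) * W)) := by
          rw [hδdef]; ring
      _ ≤ _ := by gcongr
  have hw0 : 0 ≤ annWeight N L ‖x‖ := indicator_nonneg (fun r hr => by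
    have : (0 : ℝ) < r := lt_of_lt_of_le one_pos hr.1
    positivity) _
  have hi0 : 0 ≤ (Ioo 0 T).indicator (fun _ => (1 : ℝ)) t :=
    indicator_nonneg (fun _ _ => zero_le_one) _
  have hv0 : 0 ≤ |v| * W ^ (1 / p) := by positivity
  by_cases hcase : t ∈ Ioo 0 T ∧ ‖x‖ ∈ Icc 1 (exp L)
  · rw [annWeight, indicator_of_mem hcase.1, indicator_of_mem hcase.2, one_mul]
    have hy := young_eps hpq hδ hv0 (b := C / (L * ‖x‖ ^ 2)) (by positivity)
    have hpow : (C / (L * ‖x‖ ^ 2)) ^ ((N : ℝ) / 2)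
        = C ^ ((N : ℝ) / 2) * L ^ (-((N : ℝ) / 2)) * (‖x‖ ^ N)⁻¹ := by
      rw [Real.div_rpow hC (by positivity), Real.mul_rpow hL.le (by positivity),
        Real.rpow_neg hL.le, ← Real.rpow_natCast ‖x‖ 2, ← Real.rpow_mul hx0.le,
        ← Real.rpow_natCast ‖x‖ N]
      rw [show ((2 : ℕ) : ℝ) * ((N : ℝ) / 2) = N by push_cast; ring]
      rw [div_eq_mul_inv, mul_inv, mul_assoc]
    rw [hpow] at hy
    calc |v| * |G| ≤ |v| * (C / (L * ‖x‖ ^ 2) * W ^ (1 / p)) := by gcongr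
      _ = |v| * W ^ (1 / p) * (C / (L * ‖x‖ ^ 2)) := by ring
      _ ≤ _ := by
        refine hy.trans ?_
        refine (add_le_add hφ le_rfl).trans (le_of_eq ?_)
        ring
  · have hW00 : W = 0 := by
      rw [hW]
      by_cases ht : t ∈ Ioo 0 T
      · rw [space_eq_zero hE hL, mul_zero]
        by_contra hlt
        exact hcase ⟨ht, hx, (not_le.1 hlt).le⟩
      · rw [time_eq_zero hE hT ht, zero_mul]
    have hG0 : |G| = 0 := by
      refine le_antisymm (hG.trans ?_) (abs_nonneg _)
      rw [hW00, Real.zero_rpow (by positivity), mul_zero]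
    rw [hG0, mul_zero]
    have := le_trans (by positivity) hφ
    positivity

theorem integral_time_ge (hE : IsCutoff p K E E₁ E₂) (hT : 0 < T) :
    T / 2 ≤ ∫ t in Ioi (0 : ℝ), E (2 * t / T - 1) := by
  have hcont : Continuous fun t : ℝ => E (2 * t / T - 1) := by
    have := hE.contDiff.continuous
    fun_prop
  have hint : IntegrableOn (fun t : ℝ => E (2 * t / T - 1)) (Ioi 0) :=
    (hcont.continuousOn.integrableOn_Icc (a := 0) (b := T)).of_forall_sdiff_eq_zero
      measurableSet_Ioi fun t ht => time_eq_zero hE hT fun h => ht.2 ⟨h.1.le, h.2.le⟩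
  have hsub : Icc (T / 4) (3 * T / 4) ⊆ Ioi (0 : ℝ) := fun t ht => by
    have := ht.1
    exact mem_Ioi.2 (by linarith)
  calc T / 2 = ∫ t in Icc (T / 4) (3 * T / 4), (1 : ℝ) := by
        simp; rw [max_eq_left (by linarith)]; ring
    _ = ∫ t in Icc (T / 4) (3 * T / 4), E (2 * t / T - 1) := by
        refine setIntegral_congr_fun measurableSet_Icc fun t ht => ?_
        refine (hE.eq_one _ ?_).symm
        have e1 : 1 / 2 ≤ 2 * t / T := by rw [le_div_iff₀ hT]; linarith [ht.1]
        have e2 : 2 * t / T ≤ 3 / 2 := by rw [div_le_iff₀ hT]; linarith [ht.2]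
        rw [abs_le]; constructor <;> linarith
    _ ≤ _ := setIntegral_mono_set hint (ae_of_all _ fun t => hE.nonneg _)
        hsub.eventuallyLE

/-- The estimate produced by the test function at scale `L`, after division by the length
`T = exp (2 * L)` of its time support. This `T` makes the bound on the time derivatives at most of
the order `1 / (L * ‖x‖ ^ 2)` of the bound on the Laplacian. No measurability of `u` itself is
available, so both terms on the right are dominated by integrable functions before integrating. -/
theorem flux_le (hN : 3 ≤ N) (hα : 0 < α) (hp : p = (N : ℝ) / ((N : ℝ) - 2)) (hK : 0 < K)
    (hE : IsCutoff p K E E₁ E₂) {u₀ u₁ f : Euc N → ℝ} {u : ℝ → Euc N → ℝ}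
    (hu : IsGlobalWeakSolWave N α p u₀ u₁ f u) :
    ∃ M : ℝ, ∀ L : ℝ, 1 ≤ L →
      0 < ∫ x : Metric.sphere (0 : Euc N) 1, f x ∂(sphMeasure N) →
      (((N : ℝ) - 2 + α) / α - 1) / 2 * (∫ x : Metric.sphere (0 : Euc N) 1, f x ∂(sphMeasure N))
        ≤ M * L ^ (-((N : ℝ) / 2 - 1)) := by
  have hN' : (3 : ℝ) ≤ N := by exact_mod_cast hN
  have hp1 : 1 < p := by rw [hp, lt_div_iff₀ (by linarith)]; linarith
  have hc := one_lt_const hN hα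
  set c := ((N : ℝ) - 2 + α) / α with hcdef
  set C₁ := 4 * c * K with hC₁
  set C₂ := (2 * ((N : ℝ) - 2) + c + ((N : ℝ) - 2) * c) * K with hC₂
  have hC₁0 : 0 ≤ C₁ := by rw [hC₁]; positivity
  have hC₂0 : 0 ≤ C₂ := by
    have : (0 : ℝ) ≤ (N : ℝ) - 2 := by linarith
    rw [hC₂]; positivity
  set D := ((c - 1) / 2) ^ (-((N : ℝ) / 2 / p))
  refine ⟨(D * C₁ ^ ((N : ℝ) / 2) + D * C₂ ^ ((N : ℝ) / 2))
    * (N * volume.real (Metric.ball (0 : Euc N) 1)), fun L hL hF => ?_⟩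
  have hL0 : 0 < L := by linarith
  set F := ∫ x : Metric.sphere (0 : Euc N) 1, f x ∂(sphMeasure N)
  obtain ⟨T, hTdef⟩ : ∃ T, T = exp (2 * L) := ⟨_, rfl⟩
  have hT : 0 < T := by rw [hTdef]; exact exp_pos _
  have hTL : L * exp (2 * L) ≤ T ^ 2 := by
    have : L ≤ exp (2 * L) := by linarith [Real.add_one_le_exp (2 * L)]
    rw [hTdef, sq]
    gcongr
  have hadm := admissible_testFun (K := K) hN hα hT hL0 hE
  have hw := hu.2 _ hadm
  -- the initial data do not contribute, the test function vanishing to first order at `t = 0`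
  have hi1 : ∫ x in extDom N, u₁ x * testFun N α T L E 0 x = 0 := by
    have : ∀ x, testFun N α T L E 0 x = 0 := fun x => by
      rw [testFun, time_eq_zero hE hT (by simp), zero_mul]
    simp [this]
  have hi0 : ∫ x in extDom N, u₀ x * deriv (fun s => testFun N α T L E s x) 0 = 0 := by
    have h0 : E₁ (2 * 0 / T - 1) = 0 := by
      have := hE.bound₁ (2 * 0 / T - 1)
      rw [time_eq_zero hE hT (by simp), Real.zero_rpow (by positivity), mul_zero K] at this
      exact abs_eq_zero.1 (le_antisymm this (abs_nonneg _))
    have : ∀ x : Euc N, deriv (fun s => testFun N α T L E s x) 0 = 0 := fun x => by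
      rw [deriv_testFun hE]
      simp only [h0, zero_mul]
    simp [this]
  have hb : (c - 1) * (T / 2) * F ≤ ∫ t in Ioi (0 : ℝ),
      ∫ x : Metric.sphere (0 : Euc N) 1, f x * testFun N α T L E t x ∂(sphMeasure N) := by
    have h1 : ∀ t (x : Metric.sphere (0 : Euc N) 1),
        f x * testFun N α T L E t x = (c - 1) * E (2 * t / T - 1) * f x := by
      intro t x
      have hx : ‖(x : Euc N)‖ = 1 := by simp
      have hE0 : E 0 = 1 := hE.eq_one 0 (by simp)
      rw [testFun, prof, hx]
      simp [hE0]
      ring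
    simp only [h1, integral_const_mul, integral_mul_const]
    have := integral_time_ge hE hT
    have hc0 : 0 ≤ c - 1 := by linarith
    gcongr
  -- integrability of the two functions dominating the right-hand side
  have hmeas : MeasurableSet (extDom N) := (isClosed_le continuous_const continuous_norm).measurableSet
  have hsm : MeasurableSet (Ioi (0 : ℝ) ×ˢ extDom N) := measurableSet_Ioi.prod hmeas
  have hI1 : IntegrableOn (fun q : ℝ × Euc N => |u q.1 q.2| ^ p * testFun N α T L E q.1 q.2)
      (Ioi (0 : ℝ) ×ˢ extDom N) := by
    have hcomp : IsCompact (Icc 0 T ×ˢ (extDom N ∩ Metric.closedBall (0 : Euc N) (exp L))) :=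
      isCompact_Icc.prod
        ((isCompact_closedBall _ _).inter_left (isClosed_le continuous_const continuous_norm))
    have hsub : Icc 0 T ×ˢ (extDom N ∩ Metric.closedBall (0 : Euc N) (exp L))
        ⊆ Ici (0 : ℝ) ×ˢ extDom N := prod_mono Icc_subset_Ici_self inter_subset_left
    have h1 := hu.1.integrableOn_compact_subset hsub hcomp
    refine (h1.mul_continuousOn (hadm.cont.mono hsub) hcomp).of_forall_sdiff_eq_zero hsm ?_
    rintro ⟨t, x⟩ ⟨hq, hq'⟩
    have hq1 : 0 < t := hq.1
    have hq2 : x ∈ extDom N := hq.2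
    by_cases ht : t ∈ Ioo 0 T
    · have hx : exp L ≤ ‖x‖ := by
        by_contra hlt
        exact hq' ⟨⟨ht.1.le, ht.2.le⟩, hq2, by simpa using (not_le.1 hlt).le⟩
      simp only [testFun, prof, space_eq_zero hE hL0 hx, mul_zero]
    · simp only [testFun, time_eq_zero hE hT ht, zero_mul, mul_zero]
  obtain ⟨hA1, hA2⟩ := annWeight_integrable_and_integral (N := N) (by omega) hL0.le
  have hχ : Integrable ((Ioo 0 T).indicator (fun _ => (1 : ℝ))) :=
    (integrable_indicator_iff measurableSet_Ioo).2 (by simp)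
  have hI2' : Integrable (fun q : ℝ × Euc N =>
      (Ioo 0 T).indicator (fun _ => (1 : ℝ)) q.1 * annWeight N L ‖q.2‖) := hχ.mul_prod hA1
  have hI2 := hI2'.integrableOn (s := Ioi (0 : ℝ) ×ˢ extDom N)
  have hk : ∫ q in Ioi (0 : ℝ) ×ˢ extDom N,
      (Ioo 0 T).indicator (fun _ => (1 : ℝ)) q.1 * annWeight N L ‖q.2‖
      ≤ T * (N * (volume.real (Metric.ball (0 : Euc N) 1) * L)) := by
    refine (setIntegral_le_integral hI2' (ae_of_all _ fun q => ?_)).trans (le_of_eq ?_)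
    · refine mul_nonneg (indicator_nonneg (fun _ _ => zero_le_one) _) (indicator_nonneg ?_ _)
      intro r hr
      have : (0 : ℝ) < r := lt_of_lt_of_le one_pos hr.1
      positivity
    · have h := integral_prod_mul (μ := (volume : Measure ℝ)) (ν := (volume : Measure (Euc N)))
        ((Ioo 0 T).indicator (fun _ => (1 : ℝ))) (fun x => annWeight N L ‖x‖)
      refine h.trans ?_
      rw [hA2, integral_indicator measurableSet_Ioo]
      simp [hT.le]
  have hest : ∀ (G : ℝ × Euc N → ℝ) (C : ℝ), 0 ≤ C →
      (∀ q ∈ Ioi (0 : ℝ) ×ˢ extDom N, |G q| ≤ C / (L * ‖q.2‖ ^ 2)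
        * (E (2 * q.1 / T - 1) * E (log ‖q.2‖ / L)) ^ (1 / p)) →
      -(∫ q in Ioi (0 : ℝ) ×ˢ extDom N, u q.1 q.2 * G q)
        ≤ 1 / 2 * (∫ q in Ioi (0 : ℝ) ×ˢ extDom N, |u q.1 q.2| ^ p * testFun N α T L E q.1 q.2)
          + D * C ^ ((N : ℝ) / 2) * L ^ (-((N : ℝ) / 2))
            * (T * (N * (volume.real (Metric.ball (0 : Euc N) 1) * L))) := by
    intro G C hC hG
    have hJ1 := hI1.const_mul (1 / 2 : ℝ)
    have hJ2 := hI2.const_mul (D * C ^ ((N : ℝ) / 2) * L ^ (-((N : ℝ) / 2)))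
    have h := norm_integral_le_of_norm_le (hJ1.add hJ2)
      (f := fun q : ℝ × Euc N => u q.1 q.2 * G q)
      ((ae_restrict_iff' hsm).2 (ae_of_all _ fun q hq =>
        young_pointwise hN hα hp hT hL0 hE hC (u q.1 q.2) (G q) q.1 hq.2 (hG q hq)))
    refine (neg_le_abs _).trans (h.trans ?_)
    have e := integral_add hJ1 hJ2
    simp only [Pi.add_apply] at e ⊢
    rw [e, integral_const_mul, integral_const_mul]
    have hδ : 0 < (c - 1) / 2 := by linarith
    gcongr
  have hr1 := hest (fun q => deriv (deriv (fun s => testFun N α T L E s q.2)) q.1) C₁ hC₁0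
    fun q hq => abs_dtt_le hN hα hp1 hK hT hL0 hTL hE q.1 hq.2
  have hr2 := hest (fun q => lap (testFun N α T L E q.1) q.2) C₂ hC₂0
    fun q hq => abs_lap_le hN hα hp1 hK hL hE q.1 hq.2
  rw [hi1, hi0] at hw
  have hpow : L ^ (-((N : ℝ) / 2 - 1)) = L ^ (-((N : ℝ) / 2)) * L := by
    rw [← Real.rpow_add_one hL0.ne']; congr 1; ring
  rw [hpow]
  refine le_of_mul_le_mul_left ?_ hT
  linarith

end Estimates

/-- For `N ≥ 3`, `α > 0`, `p = N/(N-2)`, `u₀, u₁ ∈ L¹_loc(Ω^c)` and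
`f ∈ L¹(∂Ω)` with `∫_{∂Ω} f dσ > 0`, the exterior Robin wave problem possesses no
global in time weak solution. -/
theorem wave_critical_no_global_weak_solution
    (N : ℕ) (hN : 3 ≤ N) (α : ℝ) (hα : 0 < α)
    (p : ℝ) (hp : p = (N : ℝ) / ((N : ℝ) - 2))
    (u₀ u₁ : Euc N → ℝ)
    (hu₀ : LocallyIntegrableOn u₀ (extDom N) volume)
    (hu₁ : LocallyIntegrableOn u₁ (extDom N) volume)
    (f : Euc N → ℝ)
    (hf : Integrable (fun x : Metric.sphere (0 : Euc N) 1 => f x) (sphMeasure N))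
    (hfpos : 0 < ∫ x : Metric.sphere (0 : Euc N) 1, f x ∂(sphMeasure N)) :
    ¬ ∃ u : ℝ → Euc N → ℝ, IsGlobalWeakSolWave N α p u₀ u₁ f u := by
  rintro ⟨u, hu⟩
  obtain ⟨E, E₁, E₂, K, hK, hE⟩ := exists_cutoff N hN p hp
  obtain ⟨M, hM⟩ := flux_le hN hα hp hK hE hu
  have hN' : (3 : ℝ) ≤ N := by exact_mod_cast hN
  have hlim : Filter.Tendsto (fun L : ℝ => M * L ^ (-((N : ℝ) / 2 - 1))) Filter.atTop (nhds 0) := by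
    simpa using (tendsto_rpow_neg_atTop (by linarith : 0 < (N : ℝ) / 2 - 1)).const_mul M
  have hle := ge_of_tendsto hlim ((Filter.eventually_ge_atTop 1).mono fun L hL => hM L hL hfpos)
  have hpos : 0 < (((N : ℝ) - 2 + α) / α - 1) / 2
      * (∫ x : Metric.sphere (0 : Euc N) 1, f x ∂(sphMeasure N)) :=
    mul_pos (by linarith [one_lt_const hN hα]) hfpos
  linarith
end
end

section
/- Let N ≥ 3, α > 0, p = N/(N-2), and fix l, k > 2p/(p-1) and a smooth nonincreasing function Ψ : ℝ → [0,1] with Ψ(s) = 1 for s ≤ 0 and Ψ(s) = 0 for s ≥ 1. For T, R > 1 define φ(t,x) = φ₁(t) φ₂(x) on Q = (0,∞) × {|x| ≥ 1}, where φ₁(t) = (1-t/T)^l for 0 ≤ t ≤ T and 0 for t > T, φ₂(x) = H(x) Ψ^k( ln(|x|/√R) / ln(√R) ). Then there exists a constant C > 0, independent of T and R, such that for all sufficiently large T and R: 𝓘₁ := ∫_Q φ^{-1/(p-1)} |φ_t|^{p/(p-1)} dx dt ≤ C T^{1 - N/2} R^N (with the integrand interpreted as 0 where φ vanishes). -/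
/-! The exponents are `p / (p - 1) = N / 2` and `1 / (p - 1) = N / 2 - 1`. Since only `φ₁` depends
on `t`, on the set `φ > 0` the integrand equals
`(l / T) ^ (N / 2) * (1 - t / T) ^ (l - N / 2) * φ₂(x)`, which is at most
`(l / T) ^ (N / 2) * (N - 2 + α) / α` because `l > N` and `0 ≤ Ψ ≤ 1` (`power_bound`, `phi2_le`).
The integrand vanishes unless `t < T` and `|x| < R` (`phi1_eq_zero`, `phi2_eq_zero`), so the integral
is bounded by this constant times the volume `T * R ^ N * |B(0,1)|` of `(0, T) × B(0, R)`. -/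

open MeasureTheory Real Set

noncomputable section

/-- The time factor `φ₁(t) = (1-t/T)^l` for `0 ≤ t ≤ T`, extended by `0` for `t > T`. -/
noncomputable def phi1 (T l : ℝ) (t : ℝ) : ℝ := if t ≤ T then (1 - t / T) ^ l else 0

/-- The space factor `φ₂(x) = H(x) Ψ^k(ln(|x|/√R)/ln(√R))` with logarithmic argument. -/
noncomputable def phi2 (N : ℕ) (α k R : ℝ) (Ψ : ℝ → ℝ) (x : Euc N) : ℝ :=
  Hfun N α x * Ψ (Real.log (‖x‖ / Real.sqrt R) / Real.log (Real.sqrt R)) ^ k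

/-- The test function `φ(t,x) = φ₁(t) φ₂(x)`. -/
noncomputable def phiTest (N : ℕ) (α l k T R : ℝ) (Ψ : ℝ → ℝ) (t : ℝ) (x : Euc N) : ℝ :=
  phi1 T l t * phi2 N α k R Ψ x

/-- The pointwise bound: writing `φ = u ^ l * b` with `u = 1 - t / T` and `φ_t = -(l / T) u ^ (l - 1) b`,
the powers of `b` collapse to `b` and those of `u` to `u ^ (l - N / 2) ≤ 1`
(here `n = N / 2 = p / (p - 1)`). -/
lemma power_bound {u b l T n : ℝ} (hu : 0 < u) (hu1 : u ≤ 1) (hb : 0 < b) (hT : 0 < T)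
    (hl : 0 < l) (hln : n ≤ l) :
    (u ^ l * b) ^ (-(n - 1)) * (l / T * u ^ (l - 1) * b) ^ n ≤ (l / T) ^ n * b := by
  have h : (u ^ l * b) ^ (-(n - 1)) * (l / T * u ^ (l - 1) * b) ^ n
      = u ^ (l - n) * ((l / T) ^ n * b) := by
    rw [mul_rpow (by positivity) hb.le, mul_rpow (by positivity) hb.le,
      mul_rpow (by positivity) (by positivity), ← rpow_mul hu.le, ← rpow_mul hu.le]
    have hbb : b ^ (-(n - 1)) * b ^ n = b := by
      rw [← rpow_add hb]; ring_nf; exact rpow_one b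
    have huu : u ^ (l * -(n - 1)) * u ^ ((l - 1) * n) = u ^ (l - n) := by
      rw [← rpow_add hu]; ring_nf
    rw [← huu]
    linear_combination (u ^ (l * -(n - 1)) * u ^ ((l - 1) * n) * (l / T) ^ n) * hbb
  rw [h]
  have h1 : u ^ (l - n) ≤ 1 := rpow_le_one hu.le hu1 (by linarith)
  exact mul_le_of_le_one_left (by positivity) h1

lemma hasDerivAt_phi1 {T l t : ℝ} (hT : 0 < T) (ht : t < T) :
    HasDerivAt (phi1 T l) (-(l / T * (1 - t / T) ^ (l - 1))) t := by
  have hu : 0 < 1 - t / T := by rw [sub_pos, div_lt_one hT]; exact ht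
  have h1 : HasDerivAt (fun s : ℝ => 1 - s / T) (-(1 / T)) t := by
    simpa using ((hasDerivAt_id t).div_const T).const_sub 1
  have h2 := h1.rpow_const (p := l) (Or.inl hu.ne')
  have h3 : HasDerivAt (fun s : ℝ => (1 - s / T) ^ l) (-(l / T * (1 - t / T) ^ (l - 1))) t := by
    convert h2 using 1; ring
  refine h3.congr_of_eventuallyEq ?_
  filter_upwards [Iio_mem_nhds ht] with s hs
  simp [phi1, (show s ≤ T from le_of_lt hs)]

lemma phi1_eq_zero {T l t : ℝ} (hT : 0 < T) (hl : 0 < l) (ht : T ≤ t) : phi1 T l t = 0 := by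
  unfold phi1
  split_ifs with h
  · have : t = T := le_antisymm h ht
    rw [this, div_self hT.ne', sub_self, zero_rpow hl.ne']
  · rfl

lemma Hfun_pos {N : ℕ} (hN : 3 ≤ N) {α : ℝ} (hα : 0 < α) {x : Euc N} (hx : 1 ≤ ‖x‖) :
    0 < Hfun N α x := by
  have hN' : (3 : ℝ) ≤ N := by exact_mod_cast hN
  have h1 : ‖x‖ ^ ((2 : ℝ) - N) ≤ 1 := rpow_le_one_of_one_le_of_nonpos hx (by linarith)
  have h2 : 1 < ((N : ℝ) - 2 + α) / α := by rw [lt_div_iff₀ hα]; linarith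
  unfold Hfun; linarith

lemma phi2_nonneg {N : ℕ} (hN : 3 ≤ N) {α : ℝ} (hα : 0 < α) {k R : ℝ} {Ψ : ℝ → ℝ}
    (hΨ : ∀ s : ℝ, Ψ s ∈ Icc (0 : ℝ) 1) {x : Euc N} (hx : 1 ≤ ‖x‖) :
    0 ≤ phi2 N α k R Ψ x :=
  mul_nonneg (Hfun_pos hN hα hx).le (rpow_nonneg (hΨ _).1 _)

lemma phi2_le {N : ℕ} (hN : 3 ≤ N) {α : ℝ} (hα : 0 < α) {k R : ℝ} (hk : 0 < k) {Ψ : ℝ → ℝ}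
    (hΨ : ∀ s : ℝ, Ψ s ∈ Icc (0 : ℝ) 1) {x : Euc N} (hx : 1 ≤ ‖x‖) :
    phi2 N α k R Ψ x ≤ ((N : ℝ) - 2 + α) / α := by
  have h1 : phi2 N α k R Ψ x ≤ Hfun N α x :=
    mul_le_of_le_one_right (Hfun_pos hN hα hx).le (rpow_le_one (hΨ _).1 (hΨ _).2 hk.le)
  have h2 : 0 ≤ ‖x‖ ^ ((2 : ℝ) - N) := by positivity
  refine h1.trans ?_
  unfold Hfun; linarith

/-- The cut-off argument `ln(|x|/√R) / ln √R` is at least `1` once `|x| ≥ R`, so `φ₂` is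
supported in the ball of radius `R`. -/
lemma phi2_eq_zero {N : ℕ} {α k R : ℝ} (hk : 0 < k) (hR : 1 < R) {Ψ : ℝ → ℝ}
    (hΨzero : ∀ s : ℝ, 1 ≤ s → Ψ s = 0) {x : Euc N} (hx : R ≤ ‖x‖) :
    phi2 N α k R Ψ x = 0 := by
  have hs : 1 < √R := by rw [Real.lt_sqrt zero_le_one]; simpa using hR
  have hs0 : 0 < √R := by linarith
  have h : 1 ≤ Real.log (‖x‖ / √R) / Real.log √R := by
    rw [le_div_iff₀ (Real.log_pos hs), one_mul]
    refine Real.log_le_log hs0 ?_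
    rw [le_div_iff₀ hs0, Real.mul_self_sqrt (by linarith)]
    exact hx
  simp [phi2, hΨzero _ h, zero_rpow hk.ne']

/-- On the support of `φ` the integrand is at most `(l / T) ^ (N / 2) sup H`, and off
`(0, T) × B(0, R)` it vanishes. -/
lemma integrand_bound {N : ℕ} (hN : 3 ≤ N) {α : ℝ} (hα : 0 < α) {l k T R n : ℝ}
    (hl : 0 < l) (hk : 0 < k) (hln : n ≤ l) (hT : 0 < T) (hR : 1 < R) {Ψ : ℝ → ℝ}
    (hΨ : ∀ s : ℝ, Ψ s ∈ Icc (0 : ℝ) 1) (hΨzero : ∀ s : ℝ, 1 ≤ s → Ψ s = 0)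
    {t : ℝ} (ht : 0 < t) {x : Euc N} (hx : 1 ≤ ‖x‖) :
    (if phiTest N α l k T R Ψ t x = 0 then 0
      else (phiTest N α l k T R Ψ t x) ^ (-(n - 1)) *
        |deriv (fun s => phiTest N α l k T R Ψ s x) t| ^ n)
      ≤ (Ioo 0 T ×ˢ Metric.ball (0 : Euc N) R).indicator
          (fun _ => (l / T) ^ n * (((N : ℝ) - 2 + α) / α)) (t, x) := by
  have hN' : (3 : ℝ) ≤ N := by exact_mod_cast hN
  have hA : 0 < ((N : ℝ) - 2 + α) / α := div_pos (by linarith) hα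
  split_ifs with h
  · exact indicator_nonneg (fun _ _ => by positivity) _
  · have h12 : phi1 T l t ≠ 0 ∧ phi2 N α k R Ψ x ≠ 0 := by
      simpa [phiTest, mul_eq_zero, not_or] using h
    have htT : t < T := by
      by_contra hc
      exact h12.1 (phi1_eq_zero hT hl (not_lt.mp hc))
    have hxR : ‖x‖ < R := by
      by_contra hc
      exact h12.2 (phi2_eq_zero hk hR hΨzero (not_lt.mp hc))
    have hb : 0 < phi2 N α k R Ψ x := lt_of_le_of_ne (phi2_nonneg hN hα hΨ hx) h12.2.symm
    have hu : 0 < 1 - t / T := by rw [sub_pos, div_lt_one hT]; exact htT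
    have hu1 : 1 - t / T ≤ 1 := by
      have : 0 < t / T := by positivity
      linarith
    have hmem : (t, x) ∈ Ioo 0 T ×ˢ Metric.ball (0 : Euc N) R := by
      simp [ht, htT, hxR]
    rw [indicator_of_mem hmem]
    have hd : deriv (fun s => phiTest N α l k T R Ψ s x) t
        = -(l / T * (1 - t / T) ^ (l - 1)) * phi2 N α k R Ψ x :=
      ((hasDerivAt_phi1 hT htT).mul_const _).deriv
    have habs : |deriv (fun s => phiTest N α l k T R Ψ s x) t|
        = l / T * (1 - t / T) ^ (l - 1) * phi2 N α k R Ψ x := by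
      rw [hd, neg_mul, abs_neg, abs_of_nonneg (by positivity)]
    have hphi : phiTest N α l k T R Ψ t x = (1 - t / T) ^ l * phi2 N α k R Ψ x := by
      simp [phiTest, phi1, htT.le]
    rw [habs, hphi]
    refine (power_bound hu hu1 hb hT hl hln).trans ?_
    exact mul_le_mul_of_nonneg_left (phi2_le hN hα hk hΨ hx) (by positivity)

/-- Capacity estimate
`𝓘₁ = ∫_Q φ^{-1/(p-1)} |φ_t|^{p/(p-1)} dx dt ≤ C T^{1-N/2} R^N`
for the test function `φ(t,x) = (1-t/T)^l H(x) Ψ^k(ln(|x|/√R)/ln √R)`,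
with `C` independent of `T, R` and `T, R` sufficiently large. -/
theorem capacity_estimate_I1 (N : ℕ) (hN : 3 ≤ N) (α : ℝ) (hα : 0 < α)
    (p : ℝ) (hp : p = (N : ℝ) / ((N : ℝ) - 2))
    (l k : ℝ) (hl : 2 * p / (p - 1) < l) (hk : 2 * p / (p - 1) < k)
    (Ψ : ℝ → ℝ) (hΨsmooth : ContDiff ℝ (⊤ : ℕ∞) Ψ)
    (hΨrange : ∀ s : ℝ, Ψ s ∈ Icc (0 : ℝ) 1)
    (hΨanti : Antitone Ψ)
    (hΨone : ∀ s : ℝ, s ≤ 0 → Ψ s = 1) (hΨzero : ∀ s : ℝ, 1 ≤ s → Ψ s = 0) :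
    ∃ C > 0, ∃ T₀ R₀ : ℝ, 1 < T₀ ∧ 1 < R₀ ∧ ∀ T ≥ T₀, ∀ R ≥ R₀,
      (∫ q in Ioi (0 : ℝ) ×ˢ extDom N,
          if phiTest N α l k T R Ψ q.1 q.2 = 0 then 0
          else (phiTest N α l k T R Ψ q.1 q.2) ^ (-(1 / (p - 1))) *
            |deriv (fun s => phiTest N α l k T R Ψ s q.2) q.1| ^ (p / (p - 1)))
        ≤ C * T ^ (1 - (N : ℝ) / 2) * R ^ (N : ℝ) := by
  have hN' : (3 : ℝ) ≤ N := by exact_mod_cast hN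
  have hN2 : (N : ℝ) - 2 ≠ 0 := by linarith
  have hp1 : p - 1 = 2 / ((N : ℝ) - 2) := by rw [hp]; field_simp; ring
  have e1 : p / (p - 1) = (N : ℝ) / 2 := by rw [hp1, hp]; field_simp
  have e2 : 1 / (p - 1) = (N : ℝ) / 2 - 1 := by rw [hp1]; field_simp
  have e3 : 2 * p / (p - 1) = N := by rw [mul_div_assoc, e1]; ring
  rw [e3] at hl hk
  rw [e1, e2]
  have hl0 : 0 < l := by linarith
  have hk0 : 0 < k := by linarith
  have hA : 0 < ((N : ℝ) - 2 + α) / α := div_pos (by linarith) hα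
  have hV : 0 < (volume : Measure (Euc N)).real (Metric.ball 0 1) :=
    ENNReal.toReal_pos (Metric.measure_ball_pos _ _ one_pos).ne' measure_ball_lt_top.ne
  set A := ((N : ℝ) - 2 + α) / α with hAdef
  set V := (volume : Measure (Euc N)).real (Metric.ball 0 1) with hVdef
  refine ⟨l ^ ((N : ℝ) / 2) * A * V, by positivity, 2, 2, one_lt_two, one_lt_two, ?_⟩
  intro T hT R hR
  have hT0 : 0 < T := by linarith
  have hR0 : 0 < R := by linarith
  set S := Ioo 0 T ×ˢ Metric.ball (0 : Euc N) R with hS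
  have hSm : MeasurableSet S := measurableSet_Ioo.prod measurableSet_ball
  have hDm : MeasurableSet (Ioi (0 : ℝ) ×ˢ extDom N) :=
    measurableSet_Ioi.prod (measurableSet_le measurable_const measurable_norm)
  have hvol : (volume : Measure (ℝ × Euc N)).real S = T * (R ^ (N : ℝ) * V) := by
    have hball : (volume : Measure (Euc N)).real (Metric.ball 0 R) = R ^ (N : ℝ) * V := by
      rw [hVdef, measureReal_def, measureReal_def, Measure.addHaar_ball_of_pos _ _ hR0, rpow_natCast]
      simp [hR0.le]
    rw [hS, Measure.volume_eq_prod, measureReal_prod_prod, hball, Real.volume_real_Ioo_of_le hT0.le,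
      sub_zero]
  have hSfin : volume S ≠ ⊤ := by
    rw [hS, Measure.volume_eq_prod, Measure.prod_prod]
    exact ENNReal.mul_ne_top (by simp) measure_ball_lt_top.ne
  have hint : Integrable (S.indicator fun _ => (l / T) ^ ((N : ℝ) / 2) * A)
      (volume : Measure (ℝ × Euc N)) :=
    (integrable_indicator_iff hSm).2 (integrableOn_const hSfin)
  calc _ ≤ ∫ q in Ioi (0 : ℝ) ×ˢ extDom N,
          S.indicator (fun _ => (l / T) ^ ((N : ℝ) / 2) * A) q := by
        -- only the majorant has to be integrable here
        refine integral_mono_of_nonneg ?_ hint.integrableOn ?_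
        · filter_upwards [ae_restrict_mem hDm] with q hq
          have hx : 1 ≤ ‖q.2‖ := hq.2
          dsimp only [Pi.zero_apply]
          split_ifs with h
          · exact le_rfl
          · refine mul_nonneg (rpow_nonneg (mul_nonneg ?_ (phi2_nonneg hN hα hΨrange hx)) _)
              (rpow_nonneg (abs_nonneg _) _)
            unfold phi1
            split_ifs with hqT
            · refine rpow_nonneg ?_ _
              rw [sub_nonneg, div_le_one hT0]
              exact hqT
            · exact le_rfl
        · filter_upwards [ae_restrict_mem hDm] with q hq
          exact integrand_bound hN hα hl0 hk0 (by linarith) hT0 (by linarith) hΨrange hΨzero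
            hq.1 hq.2
    _ ≤ ∫ q, S.indicator (fun _ => (l / T) ^ ((N : ℝ) / 2) * A) q :=
        setIntegral_le_integral hint
          (Filter.Eventually.of_forall (indicator_nonneg (fun _ _ => by positivity)))
    _ = T * (R ^ (N : ℝ) * V) * ((l / T) ^ ((N : ℝ) / 2) * A) := by
        rw [integral_indicator hSm, setIntegral_const, hvol, smul_eq_mul]
    _ = l ^ ((N : ℝ) / 2) * A * V * T ^ (1 - (N : ℝ) / 2) * R ^ (N : ℝ) := by
        rw [div_rpow hl0.le hT0.le, rpow_sub hT0, rpow_one]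
        ring
end
end

section
/- Let N ≥ 3, α > 0, p = N/(N-2), and fix l, k > 2p/(p-1) and a smooth nonincreasing function Ψ : ℝ → [0,1] with Ψ(s) = 1 for s ≤ 0 and Ψ(s) = 0 for s ≥ 1. For T, R > 1 define φ(t,x) = φ₁(t) φ₂(x) on Q = (0,∞) × {|x| ≥ 1}, where φ₁(t) = (1-t/T)^l for 0 ≤ t ≤ T and 0 for t > T, φ₂(x) = H(x) Ψ^k( ln(|x|/√R) / ln(√R) ). Then there exists a constant C > 0, independent of T and R, such that for all sufficiently large T and R: 𝓘₃ := ∫_Q φ^{-1/(p-1)} |Δ_x φ|^{p/(p-1)} dx dt ≤ C T ( (ln R)^{1-N} + (ln R)^{1-N/2} ) (with the integrand interpreted as 0 where φ vanishes). -/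
/-!
With `p = N/(N-2)` one has `1/(p-1) = (N-2)/2`, `p/(p-1) = N/2` and `2p/(p-1) = N`. The time factor
`φ₁` enters the integrand with exponent `N/2 - (N-2)/2 = 1` and is at most `1` on `(0, T]`, which
gives the factor `T`.

In space, `H` is harmonic and bounded between two positive constants, so every term of `Δφ₂`
carries a derivative of the cutoff. With `L = log √R ≥ 1` this gives
`|Δφ₂| ≤ D Ψ^{k-2} / (L |x|²)`, supported in `√R ≤ |x| ≤ R`. Hence
`φ₂^{-(N-2)/2} |Δφ₂|^{N/2} ≤ K Ψ^{k-N} L^{-N/2} |x|^{-N} ≤ K L^{-N/2} |x|^{-N}` since `k > N`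
(`pointwise_bound`). The Laplacian is computed from the radial formula `lap_of_log_normSq` in the
variable `log |x|²`, in which `H` is affine in an exponential and the cutoff argument is affine.

Integrating `|x|^{-N}` over the annulus yields a multiple of `L` (`integral_annulus`), so the total
is at most a constant times `T L^{1-N/2}`; the term `(log R)^{1-N}` is nonnegative and not needed.
-/

open MeasureTheory Real Set

noncomputable section

open Topology Filter

/-- The Laplacian of a radial function written in the variable `τ = log |x|²`:
`Δ g(log |x|²) = (4 g'' + (2N - 4) g') / |x|²`. -/
lemma lap_of_log_normSq {N : ℕ} (f : Euc N → ℝ) (g g' : ℝ → ℝ) (g'' : ℝ) (x : Euc N)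
    (hx : x ≠ 0) (hf : f =ᶠ[𝓝 x] fun y => g (Real.log (‖y‖ ^ 2)))
    (hg : ∀ᶠ τ in 𝓝 (Real.log (‖x‖ ^ 2)), HasDerivAt g (g' τ) τ)
    (hg' : HasDerivAt g' g'' (Real.log (‖x‖ ^ 2))) :
    lap f x = (4 * g'' + (2 * (N : ℝ) - 4) * g' (Real.log (‖x‖ ^ 2))) / ‖x‖ ^ 2 := by
  have hlog : ∀ y : Euc N, y ≠ 0 → HasFDerivAt (fun y : Euc N => Real.log (‖y‖ ^ 2))
      ((‖y‖ ^ 2)⁻¹ • (2 • innerSL ℝ y)) y := fun y hy =>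
    ((hasStrictFDerivAt_norm_sq y).hasFDerivAt).log (by positivity)
  have hs : ‖x‖ ^ 2 ≠ 0 := by positivity
  have hcont : ContinuousAt (fun y : Euc N => Real.log (‖y‖ ^ 2)) x := (hlog x hx).continuousAt
  have hev : ∀ i : Fin N, (fun y => fderiv ℝ f y (EuclideanSpace.single i 1)) =ᶠ[𝓝 x]
      fun y => g' (Real.log (‖y‖ ^ 2)) * (2 * y i * (‖y‖ ^ 2)⁻¹) := by
    intro i
    filter_upwards [hf.eventuallyEq_nhds, hcont.eventually hg, isOpen_ne.mem_nhds hx]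
      with y h1 h2 h3
    have h4 : HasFDerivAt (fun y : Euc N => g (Real.log (‖y‖ ^ 2))) _ y :=
      h2.comp_hasFDerivAt y (hlog y h3)
    rw [h1.fderiv_eq, h4.fderiv]
    simp [EuclideanSpace.inner_single_right]
    left
    ring
  have hterm : ∀ i : Fin N,
      fderiv ℝ (fun y => fderiv ℝ f y (EuclideanSpace.single i 1)) x (EuclideanSpace.single i 1)
      = (4 * g'' - 4 * g' (Real.log (‖x‖ ^ 2))) / (‖x‖ ^ 2) ^ 2 * (x i) ^ 2
        + 2 * g' (Real.log (‖x‖ ^ 2)) / ‖x‖ ^ 2 := by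
    intro i
    have hcoord : HasFDerivAt (fun y : Euc N => y i) (EuclideanSpace.proj (𝕜 := ℝ) i) x :=
      (EuclideanSpace.proj (𝕜 := ℝ) i : Euc N →L[ℝ] ℝ).hasFDerivAt
    have hinv : HasFDerivAt (fun y : Euc N => (‖y‖ ^ 2)⁻¹)
        ((-((‖x‖ ^ 2) ^ 2)⁻¹) • (2 • innerSL ℝ x)) x :=
      (hasDerivAt_inv hs).comp_hasFDerivAt x (hasStrictFDerivAt_norm_sq x).hasFDerivAt
    have h : HasFDerivAt
        (fun y : Euc N => g' (Real.log (‖y‖ ^ 2)) * (2 * y i * (‖y‖ ^ 2)⁻¹)) _ x :=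
      (hg'.comp_hasFDerivAt x (hlog x hx)).mul ((hcoord.const_mul 2).mul hinv)
    rw [(hev i).fderiv_eq, h.fderiv]
    simp [EuclideanSpace.inner_single_right]
    field_simp
    ring
  have hsum : ∑ i : Fin N, (x i) ^ 2 = ‖x‖ ^ 2 := by
    rw [EuclideanSpace.norm_sq_eq]; simp
  unfold lap
  rw [Finset.sum_congr rfl (fun i _ => hterm i), Finset.sum_add_distrib, ← Finset.mul_sum, hsum]
  simp
  field_simp
  ring

/-- `|x|^{-N}` has a logarithmic integral over annuli, because in polar coordinates the density
is `r^{-N} r^{N-1} = 1/r`. The constant `S` is the area of the unit sphere. -/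
lemma integral_annulus (N : ℕ) (hN : 3 ≤ N) : ∃ S : ℝ, 0 < S ∧ ∀ a b K : ℝ, 0 < a → a ≤ b →
    Integrable (fun x : Euc N => (Icc a b).indicator (fun r => K * r ^ (-(N:ℝ))) ‖x‖) ∧
    ∫ x : Euc N, (Icc a b).indicator (fun r => K * r ^ (-(N:ℝ))) ‖x‖ = S * K * Real.log (b / a) := by
  have : Nonempty (Fin N) := ⟨⟨0, by omega⟩⟩
  have : Nontrivial (Euc N) := inferInstance
  refine ⟨N * (volume : Measure (Euc N)).real (Metric.ball 0 1), ?_, ?_⟩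
  · have : 0 < (volume : Measure (Euc N)).real (Metric.ball 0 1) := by
      rw [measureReal_def]
      exact ENNReal.toReal_pos (Metric.measure_ball_pos _ _ one_pos).ne' measure_ball_lt_top.ne
    have : (0:ℝ) < N := by exact_mod_cast (by omega : 0 < N)
    positivity
  intro a b K ha hab
  have heq : ∀ y ∈ Ioi (0:ℝ), y ^ (N - 1) • (Icc a b).indicator (fun r => K * r ^ (-(N:ℝ))) y
      = (Icc a b).indicator (fun r => K * r⁻¹) y := by
    intro y hy
    have hy : 0 < y := hy
    by_cases h : y ∈ Icc a b
    · simp only [indicator_of_mem h, smul_eq_mul]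
      rw [Real.rpow_neg hy.le, Real.rpow_natCast]
      obtain ⟨n, rfl⟩ : ∃ n, N = n + 1 := ⟨N - 1, by omega⟩
      simp only [Nat.add_sub_cancel, pow_succ]
      field_simp
    · simp [indicator_of_notMem h]
  have hsub : Ioi (0:ℝ) ∩ Icc a b = Icc a b :=
    inter_eq_right.2 fun y hy => ha.trans_le hy.1
  have hii : IntegrableOn (fun r : ℝ => K * r⁻¹) (Icc a b) := by
    apply ContinuousOn.integrableOn_Icc
    exact continuousOn_const.mul (continuousOn_inv₀.mono fun y hy => (ha.trans_le hy.1).ne')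
  constructor
  · rw [integrable_fun_norm_addHaar (μ := (volume : Measure (Euc N)))
      (f := (Icc a b).indicator (fun r => K * r ^ (-(N:ℝ))))]
    simp only [finrank_euclideanSpace, Fintype.card_fin]
    rw [integrableOn_congr_fun heq measurableSet_Ioi]
    exact ((integrable_indicator_iff measurableSet_Icc).2 hii).integrableOn
  · rw [integral_fun_norm_addHaar (volume : Measure (Euc N))
      ((Icc a b).indicator (fun r => K * r ^ (-(N:ℝ))))]
    simp only [finrank_euclideanSpace, Fintype.card_fin]
    rw [setIntegral_congr_fun measurableSet_Ioi heq, setIntegral_indicator measurableSet_Icc, hsub,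
      integral_Icc_eq_integral_Ioc, ← intervalIntegral.integral_of_le hab,
      intervalIntegral.integral_const_mul, integral_inv_of_pos ha (ha.trans_le hab)]
    simp
    ring

/-- The pointwise estimate behind the capacity estimate, with the value `c` of the time factor
frozen: the integrand vanishes off the annulus `√R ≤ |x| ≤ R` and is at most a constant times
`(log √R)^{-N/2} |x|^{-N}` on it. At points where the test function is nonzero, `Ψ > 0` nearby, so
`Ψ^k` may be differentiated there as a smooth function. -/
lemma pointwise_bound {N : ℕ} (hN : 3 ≤ N) {α : ℝ} (hα : 0 < α) {k : ℝ} (hk : (N : ℝ) < k)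
    {Ψ : ℝ → ℝ} (hΨsmooth : ContDiff ℝ (⊤ : ℕ∞) Ψ)
    (hΨrange : ∀ s : ℝ, Ψ s ∈ Icc (0 : ℝ) 1)
    (hΨone : ∀ s : ℝ, s ≤ 0 → Ψ s = 1) (hΨzero : ∀ s : ℝ, 1 ≤ s → Ψ s = 0) :
    ∃ K : ℝ, 0 < K ∧ ∀ c R : ℝ, 0 ≤ c → c ≤ 1 → Real.exp 2 ≤ R → ∀ x : Euc N, 1 ≤ ‖x‖ →
      c * phi2 N α k R Ψ x ≠ 0 →
      (c * phi2 N α k R Ψ x) ^ (-(((N : ℝ) - 2) / 2)) *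
        |lap (fun y => c * phi2 N α k R Ψ y) x| ^ ((N : ℝ) / 2) ≤
      (Icc (√R) R).indicator
        (fun r => K * (Real.log R / 2) ^ (-((N : ℝ) / 2)) * r ^ (-(N : ℝ))) ‖x‖ := by
  have hN3 : (3 : ℝ) ≤ N := by exact_mod_cast hN
  have hdiff : Differentiable ℝ Ψ := hΨsmooth.differentiable (by simp)
  have hsm2 : ContDiff ℝ 2 Ψ := mod_cast contDiff_infty.1 hΨsmooth 2
  have hsm1 : ContDiff ℝ 1 (deriv Ψ) := (contDiff_succ_iff_deriv (n := 1)).1 hsm2 |>.2.2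
  have hdiff' : Differentiable ℝ (deriv Ψ) := hsm1.differentiable (by simp)
  obtain ⟨B₁, hB₁⟩ := (isCompact_Icc (a := (0:ℝ)) (b := 1)).exists_bound_of_continuousOn
    hsm1.continuous.continuousOn
  obtain ⟨B₂, hB₂⟩ := (isCompact_Icc (a := (0:ℝ)) (b := 1)).exists_bound_of_continuousOn
    (hsm1.continuous_deriv (by simp)).continuousOn
  set m : ℝ := (N : ℝ) - 2 with hm
  have hm1 : 1 ≤ m := by linarith
  set A : ℝ := (m + α) / α with hA
  have hA1 : A = m / α + 1 := by rw [hA]; field_simp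
  set h₀ : ℝ := m / α with hh₀
  have hh₀pos : 0 < h₀ := by positivity
  set B : ℝ := max (max B₁ B₂) 1 with hB
  have hBpos : 0 < B := by positivity
  have hb1 : ∀ s ∈ Icc (0:ℝ) 1, |deriv Ψ s| ≤ B := fun s hs =>
    (hB₁ s hs).trans ((le_max_left _ _).trans (le_max_left _ _))
  have hb2 : ∀ s ∈ Icc (0:ℝ) 1, |deriv (deriv Ψ) s| ≤ B := fun s hs =>
    (hB₂ s hs).trans ((le_max_right _ _).trans (le_max_left _ _))
  have hkpos : 0 < k := by linarith
  set D : ℝ := 2 * m * (k * B) + A * (k * (k - 1) * B ^ 2 + k * B) + m * (A * (k * B)) with hD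
  have hApos : 0 < A := by positivity
  have hk1 : 0 < k - 1 := by linarith
  have hDpos : 0 < D := by positivity
  refine ⟨h₀ ^ (-(m / 2)) * D ^ ((N : ℝ) / 2), by positivity, ?_⟩
  intro c R hc0 hc1 hR x hx hne
  have hRpos : 0 < R := (Real.exp_pos 2).trans_le hR
  set L : ℝ := Real.log R / 2 with hL
  have hL1 : 1 ≤ L := by
    have := (Real.le_log_iff_exp_le hRpos).2 hR
    rw [hL]; linarith
  have hLpos : 0 < L := by linarith
  have hlogsqrt : Real.log (√R) = L := by rw [Real.log_sqrt hRpos.le]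
  have hx0 : x ≠ 0 := by
    rintro rfl; simp at hx; linarith
  have hxpos : 0 < ‖x‖ := by linarith
  have hphi : ∀ y : Euc N, y ≠ 0 → phi2 N α k R Ψ y =
      (A - Real.exp (-(m / 2) * Real.log (‖y‖ ^ 2))) *
        Ψ (Real.log (‖y‖ ^ 2) / (2 * L) - 1) ^ k := by
    intro y hy
    have hy' : 0 < ‖y‖ := norm_pos_iff.2 hy
    unfold phi2 Hfun
    rw [Real.log_div hy'.ne' (by positivity), hlogsqrt, Real.log_pow, Real.rpow_def_of_pos hy']
    have e1 : Real.log ‖y‖ * (2 - (N : ℝ)) = -(m / 2) * ((2 : ℕ) * Real.log ‖y‖) := by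
      rw [hm]; push_cast; ring
    have e2 : (Real.log ‖y‖ - L) / L = (2 : ℕ) * Real.log ‖y‖ / (2 * L) - 1 := by
      push_cast; field_simp
    rw [e1, e2]
  set τ : ℝ := Real.log (‖x‖ ^ 2) with hτ
  have hτ0 : 0 ≤ τ := Real.log_nonneg (one_le_pow₀ hx)
  set u : ℝ := τ / (2 * L) - 1 with hu
  set E : ℝ := Real.exp (-(m / 2) * τ) with hE
  have hEpos : 0 < E := Real.exp_pos _
  have hE1 : E ≤ 1 := by
    apply Real.exp_le_one_iff.2
    have : 0 ≤ m / 2 * τ := by positivity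
    linarith
  have hcpos : 0 < c := lt_of_le_of_ne hc0 fun h => hne (by simp [← h])
  have hψpos : 0 < Ψ u := by
    refine lt_of_le_of_ne (hΨrange u).1 fun h => hne ?_
    rw [hphi x hx0, ← hτ, ← hu, ← h, Real.zero_rpow hkpos.ne']; simp
  have hψ1 : Ψ u ≤ 1 := (hΨrange u).2
  -- Derivatives of the radial profile in the variable `σ = log |y|²`.
  have hlin : ∀ σ : ℝ, HasDerivAt (fun σ : ℝ => σ / (2 * L) - 1) (1 / (2 * L)) σ := fun σ =>
    ((hasDerivAt_id σ).div_const (2 * L)).sub_const 1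
  have hexp : ∀ σ : ℝ, HasDerivAt (fun σ : ℝ => Real.exp (-(m / 2) * σ))
      (Real.exp (-(m / 2) * σ) * (-(m / 2))) σ := fun σ => by
    simpa using ((hasDerivAt_id σ).const_mul (-(m / 2))).exp
  have hH : ∀ σ : ℝ, HasDerivAt (fun σ : ℝ => A - Real.exp (-(m / 2) * σ))
      (m / 2 * Real.exp (-(m / 2) * σ)) σ := fun σ => by
    exact ((hexp σ).const_sub A).congr_deriv (by ring)
  have hΨc : ∀ σ : ℝ, HasDerivAt (fun σ : ℝ => Ψ (σ / (2 * L) - 1))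
      (deriv Ψ (σ / (2 * L) - 1) * (1 / (2 * L))) σ := fun σ =>
    (hdiff _).hasDerivAt.comp σ (hlin σ)
  have hΨc' : HasDerivAt (fun σ : ℝ => deriv Ψ (σ / (2 * L) - 1))
      (deriv (deriv Ψ) u * (1 / (2 * L))) τ :=
    (hdiff' _).hasDerivAt.comp τ (hlin τ)
  have hpos_ev : ∀ᶠ σ in 𝓝 τ, Ψ (σ / (2 * L) - 1) ≠ 0 :=
    (hΨc τ).continuousAt.eventually_ne hψpos.ne'
  have hder1 : ∀ᶠ σ in 𝓝 τ, HasDerivAt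
      (fun σ : ℝ => c * ((A - Real.exp (-(m / 2) * σ)) * Ψ (σ / (2 * L) - 1) ^ k))
      ((fun σ : ℝ => c * (m / 2 * Real.exp (-(m / 2) * σ) * Ψ (σ / (2 * L) - 1) ^ k +
        (A - Real.exp (-(m / 2) * σ)) *
          (deriv Ψ (σ / (2 * L) - 1) * (1 / (2 * L)) * k * Ψ (σ / (2 * L) - 1) ^ (k - 1)))) σ)
      σ := by
    filter_upwards [hpos_ev] with σ hσ
    exact ((hH σ).mul ((hΨc σ).rpow_const (Or.inl hσ))).const_mul c
  have hder2 := ((((hexp τ).const_mul (m / 2)).mul ((hΨc τ).rpow_const (p := k)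
      (Or.inl hψpos.ne'))).add ((hH τ).mul (((hΨc'.mul_const (1 / (2 * L))).mul_const k).mul
      ((hΨc τ).rpow_const (p := k - 1) (Or.inl hψpos.ne'))))).const_mul c
  have hlap := lap_of_log_normSq (fun y => c * phi2 N α k R Ψ y) _ _ _ x hx0
    (by
      filter_upwards [isOpen_ne.mem_nhds hx0] with y hy
      rw [hphi y hy]) hder1 hder2
  have hpk : Ψ u ^ k = Ψ u ^ (k - 2) * Ψ u ^ 2 := by
    rw [← Real.rpow_natCast, ← Real.rpow_add hψpos]; norm_num
  have hpk1 : Ψ u ^ (k - 1) = Ψ u ^ (k - 2) * Ψ u := by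
    rw [← Real.rpow_add_one hψpos.ne']; congr 1; ring
  have hpk2 : Ψ u ^ (k - 1 - 1) = Ψ u ^ (k - 2) := by congr 1; ring
  -- The terms without derivatives of `Ψ` cancel because `H` is harmonic.
  have hlap2 : lap (fun y => c * phi2 N α k R Ψ y) x = c * Ψ u ^ (k - 2) / (L * ‖x‖ ^ 2) *
      (2 * m * E * (k * Ψ u * deriv Ψ u) +
        (A - E) * (k * (k - 1) * deriv Ψ u ^ 2 + k * Ψ u * deriv (deriv Ψ) u) / L +
        m * ((A - E) * (k * Ψ u * deriv Ψ u))) := by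
    have hNm : 2 * (N : ℝ) - 4 = 2 * m := by rw [hm]; ring
    rw [hlap, hNm]
    simp only [Pi.mul_apply, ← hτ, ← hu, ← hE]
    rw [hpk2, hpk1, hpk]
    field_simp
    ring
  -- For `|x| < √R` the cutoff is locally constant, so the Laplacian vanishes.
  by_cases hu0 : u < 0
  · have hloc : Ψ =ᶠ[𝓝 u] fun _ => 1 := by
      filter_upwards [Iio_mem_nhds hu0] with s hs using hΨone s (le_of_lt hs)
    have hd1 : deriv Ψ u = 0 := by rw [hloc.deriv_eq]; simp
    have hd2 : deriv (deriv Ψ) u = 0 := by rw [hloc.deriv.deriv_eq]; simp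
    rw [hlap2, hd1, hd2]
    have : (N : ℝ) / 2 ≠ 0 := by positivity
    simp only [mul_zero, ne_eq, OfNat.ofNat_ne_zero, not_false_eq_true, zero_pow, add_zero,
      zero_div, abs_zero, Real.zero_rpow this]
    apply indicator_nonneg
    intro r hr
    have : 0 ≤ r := (Real.sqrt_nonneg R).trans hr.1
    positivity
  push Not at hu0
  have hu1 : u < 1 := by
    by_contra h
    push Not at h
    exact hψpos.ne' (hΨzero u h)
  have hτ2 : τ = 2 * Real.log ‖x‖ := by rw [hτ, Real.log_pow]; norm_num
  have hmem : ‖x‖ ∈ Icc (√R) R := by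
    rw [hu] at hu0 hu1
    have h1 : 1 ≤ τ / (2 * L) := by linarith
    have h2 : τ / (2 * L) ≤ 2 := by linarith
    rw [le_div_iff₀ (by positivity)] at h1
    rw [div_le_iff₀ (by positivity)] at h2
    constructor
    · rw [← Real.log_le_log_iff (by positivity) hxpos, hlogsqrt]; linarith
    · rw [← Real.log_le_log_iff hxpos hRpos]; linarith
  rw [indicator_of_mem hmem]
  have hd1 := hb1 u ⟨hu0, hu1.le⟩
  have hd2 := hb2 u ⟨hu0, hu1.le⟩
  have hAE : 0 ≤ A - E := by linarith
  have hAE' : A - E ≤ A := by linarith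
  have hbr : |2 * m * E * (k * Ψ u * deriv Ψ u) +
        (A - E) * (k * (k - 1) * deriv Ψ u ^ 2 + k * Ψ u * deriv (deriv Ψ) u) / L +
        m * ((A - E) * (k * Ψ u * deriv Ψ u))| ≤ D := by
    have e1 : |k * Ψ u * deriv Ψ u| ≤ k * B := by
      rw [abs_mul, abs_mul, abs_of_pos hkpos, abs_of_pos hψpos, mul_assoc]
      gcongr
      calc Ψ u * |deriv Ψ u| ≤ 1 * B := by gcongr
        _ = B := one_mul B
    have e2 : |k * Ψ u * deriv (deriv Ψ) u| ≤ k * B := by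
      rw [abs_mul, abs_mul, abs_of_pos hkpos, abs_of_pos hψpos, mul_assoc]
      gcongr
      calc Ψ u * |deriv (deriv Ψ) u| ≤ 1 * B := by gcongr
        _ = B := one_mul B
    have e3 : |k * (k - 1) * deriv Ψ u ^ 2| ≤ k * (k - 1) * B ^ 2 := by
      rw [abs_mul, abs_pow, abs_of_pos (by positivity : 0 < k * (k - 1))]
      gcongr
    have f1 : |2 * m * E * (k * Ψ u * deriv Ψ u)| ≤ 2 * m * (k * B) := by
      rw [abs_mul, abs_of_pos (by positivity : 0 < 2 * m * E)]
      have : 2 * m * E ≤ 2 * m := mul_le_of_le_one_right (by positivity) hE1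
      gcongr
    have f2 : |(A - E) * (k * (k - 1) * deriv Ψ u ^ 2 + k * Ψ u * deriv (deriv Ψ) u) / L| ≤
        A * (k * (k - 1) * B ^ 2 + k * B) := by
      rw [abs_div, abs_mul, abs_of_nonneg hAE, abs_of_pos hLpos]
      refine (div_le_self (by positivity) hL1).trans ?_
      gcongr
      exact (abs_add_le _ _).trans (add_le_add e3 e2)
    have f3 : |m * ((A - E) * (k * Ψ u * deriv Ψ u))| ≤ m * (A * (k * B)) := by
      rw [abs_mul, abs_mul, abs_of_nonneg hAE, abs_of_pos (by linarith : 0 < m)]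
      gcongr
    exact (abs_add_three _ _ _).trans (add_le_add (add_le_add f1 f2) f3)
  have habs : |lap (fun y => c * phi2 N α k R Ψ y) x| ≤
      c * Ψ u ^ (k - 2) / (L * ‖x‖ ^ 2) * D := by
    rw [hlap2, abs_mul, abs_of_pos (by positivity : 0 < c * Ψ u ^ (k - 2) / (L * ‖x‖ ^ 2))]
    gcongr
  have hval : phi2 N α k R Ψ x = (A - E) * Ψ u ^ k := hphi x hx0
  have hAh : h₀ ≤ A - E := by rw [hA1]; linarith
  have hlow : c * (h₀ * Ψ u ^ k) ≤ c * phi2 N α k R Ψ x := by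
    rw [hval]; gcongr
  have hpow1 : (c * phi2 N α k R Ψ x) ^ (-(m / 2)) ≤ (c * (h₀ * Ψ u ^ k)) ^ (-(m / 2)) :=
    Real.rpow_le_rpow_of_nonpos (by positivity) hlow (by linarith)
  have hpow2 : |lap (fun y => c * phi2 N α k R Ψ y) x| ^ ((N : ℝ) / 2) ≤
      (c * Ψ u ^ (k - 2) / (L * ‖x‖ ^ 2) * D) ^ ((N : ℝ) / 2) :=
    Real.rpow_le_rpow (abs_nonneg _) habs (by positivity)
  -- The exponents balance: `c` ends up with exponent `1` and `Ψ` with exponent `k - N > 0`.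
  have hcexp : c ^ (-(m / 2)) * c ^ ((N : ℝ) / 2) = c := by
    rw [← Real.rpow_add hcpos, hm]
    have : -(((N : ℝ) - 2) / 2) + (N : ℝ) / 2 = 1 := by ring
    rw [this, Real.rpow_one]
  have hψexp : (Ψ u ^ k) ^ (-(m / 2)) * (Ψ u ^ (k - 2)) ^ ((N : ℝ) / 2) = Ψ u ^ (k - N) := by
    rw [← Real.rpow_mul hψpos.le, ← Real.rpow_mul hψpos.le, ← Real.rpow_add hψpos, hm]
    congr 1; ring
  have hψle : Ψ u ^ (k - N) ≤ 1 := Real.rpow_le_one hψpos.le hψ1 (by linarith)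
  have hxexp : (‖x‖ ^ 2) ^ (-((N : ℝ) / 2)) = ‖x‖ ^ (-(N : ℝ)) := by
    rw [← Real.rpow_natCast, ← Real.rpow_mul hxpos.le]
    congr 1; push_cast; ring
  calc _ ≤ (c * (h₀ * Ψ u ^ k)) ^ (-(m / 2)) *
        (c * Ψ u ^ (k - 2) / (L * ‖x‖ ^ 2) * D) ^ ((N : ℝ) / 2) := by
        gcongr
    _ = (c ^ (-(m / 2)) * c ^ ((N : ℝ) / 2)) *
        ((Ψ u ^ k) ^ (-(m / 2)) * (Ψ u ^ (k - 2)) ^ ((N : ℝ) / 2)) *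
        (h₀ ^ (-(m / 2)) * D ^ ((N : ℝ) / 2) * L ^ (-((N : ℝ) / 2)) *
          (‖x‖ ^ 2) ^ (-((N : ℝ) / 2))) := by
        rw [Real.mul_rpow hc0 (by positivity),
          Real.mul_rpow hh₀pos.le (by positivity),
          Real.mul_rpow (by positivity) hDpos.le,
          Real.div_rpow (x := c * Ψ u ^ (k - 2)) (by positivity) (by positivity),
          Real.mul_rpow hc0 (by positivity),
          Real.mul_rpow (by positivity) (by positivity),
          Real.rpow_neg hLpos.le, Real.rpow_neg (by positivity : 0 ≤ ‖x‖ ^ 2)]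
        field_simp
    _ ≤ 1 * 1 * (h₀ ^ (-(m / 2)) * D ^ ((N : ℝ) / 2) * L ^ (-((N : ℝ) / 2)) *
          (‖x‖ ^ 2) ^ (-((N : ℝ) / 2))) := by
        rw [hcexp, hψexp]
        gcongr
    _ = _ := by rw [hxexp]; ring

/-- Capacity estimate
`𝓘₃ = ∫_Q φ^{-1/(p-1)} |Δ_x φ|^{p/(p-1)} dx dt ≤ C T ((ln R)^{1-N} + (ln R)^{1-N/2})`
for the test function `φ(t,x) = (1-t/T)^l H(x) Ψ^k(ln(|x|/√R)/ln √R)`,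
with `C` independent of `T, R` and `T, R` sufficiently large. -/
theorem capacity_estimate_I3 (N : ℕ) (hN : 3 ≤ N) (α : ℝ) (hα : 0 < α)
    (p : ℝ) (hp : p = (N : ℝ) / ((N : ℝ) - 2))
    (l k : ℝ) (hl : 2 * p / (p - 1) < l) (hk : 2 * p / (p - 1) < k)
    (Ψ : ℝ → ℝ) (hΨsmooth : ContDiff ℝ (⊤ : ℕ∞) Ψ)
    (hΨrange : ∀ s : ℝ, Ψ s ∈ Icc (0 : ℝ) 1)
    (hΨanti : Antitone Ψ)
    (hΨone : ∀ s : ℝ, s ≤ 0 → Ψ s = 1) (hΨzero : ∀ s : ℝ, 1 ≤ s → Ψ s = 0) :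
    ∃ C > 0, ∃ T₀ R₀ : ℝ, 1 < T₀ ∧ 1 < R₀ ∧ ∀ T ≥ T₀, ∀ R ≥ R₀,
      (∫ q in Ioi (0 : ℝ) ×ˢ extDom N,
          if phiTest N α l k T R Ψ q.1 q.2 = 0 then 0
          else (phiTest N α l k T R Ψ q.1 q.2) ^ (-(1 / (p - 1))) *
            |lap (fun y => phiTest N α l k T R Ψ q.1 y) q.2| ^ (p / (p - 1)))
        ≤ C * T * ((Real.log R) ^ (1 - (N : ℝ)) + (Real.log R) ^ (1 - (N : ℝ) / 2)) := by
  have hN3 : (3 : ℝ) ≤ N := by exact_mod_cast hN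
  have hN2 : (N : ℝ) - 2 ≠ 0 := by linarith
  have hp1 : p - 1 = 2 / ((N : ℝ) - 2) := by rw [hp]; field_simp; ring
  have hq : 1 / (p - 1) = ((N : ℝ) - 2) / 2 := by rw [hp1]; field_simp
  have hq' : p / (p - 1) = (N : ℝ) / 2 := by rw [hp1, hp]; field_simp
  have h2q : 2 * p / (p - 1) = N := by rw [mul_div_assoc, hq']; ring
  rw [h2q] at hl hk
  have hlpos : 0 < l := by linarith
  obtain ⟨K, hK, hpt⟩ := pointwise_bound hN hα hk hΨsmooth hΨrange hΨone hΨzero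
  obtain ⟨S, hS, hann⟩ := integral_annulus N hN
  refine ⟨S * K * 2 ^ ((N : ℝ) / 2 - 1), by positivity, 2, Real.exp 2, by norm_num,
    Real.one_lt_exp_iff.2 (by norm_num), ?_⟩
  intro T hT R hR
  have hTpos : 0 < T := by linarith
  have hRpos : 0 < R := (Real.exp_pos 2).trans_le hR
  have hR1 : 1 ≤ R := (Real.one_le_exp (by norm_num)).trans hR
  have hlog : 2 ≤ Real.log R := (Real.le_log_iff_exp_le hRpos).2 hR
  have hsq : √R ≤ R := (Real.sqrt_le_left hRpos.le).2 (by nlinarith)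
  set M : ℝ := K * (Real.log R / 2) ^ (-((N : ℝ) / 2)) with hM
  have hMpos : 0 < M := by positivity
  set F : Euc N → ℝ := fun x => (Icc (√R) R).indicator (fun r => M * r ^ (-(N : ℝ))) ‖x‖ with hF
  obtain ⟨hFi, hFint⟩ := hann (√R) R M (by positivity) hsq
  have hFnn : ∀ x, 0 ≤ F x := fun x => by
    apply indicator_nonneg
    intro r hr
    have : 0 ≤ r := (Real.sqrt_nonneg R).trans hr.1
    positivity
  set G : ℝ → ℝ := (Iic T).indicator (fun _ => (1 : ℝ)) with hG
  have hGi : Integrable G (volume.restrict (Ioi 0)) := by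
    rw [hG, integrable_indicator_iff measurableSet_Iic, IntegrableOn,
      Measure.restrict_restrict measurableSet_Iic, Iic_inter_Ioi]
    exact integrable_const _
  have hGint : ∫ t in Ioi 0, G t = T := by
    rw [hG, setIntegral_indicator measurableSet_Iic, Ioi_inter_Iic]
    simp [hTpos.le]
  have hrest : (volume : Measure (ℝ × Euc N)).restrict (Ioi (0 : ℝ) ×ˢ extDom N) =
      (volume.restrict (Ioi 0)).prod (volume.restrict (extDom N)) := by
    rw [Measure.prod_restrict, Measure.volume_eq_prod]
  have hmeas : MeasurableSet (extDom N) := measurableSet_le measurable_const measurable_norm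
  have hphi1 : ∀ t : ℝ, 0 < t → 0 ≤ phi1 T l t ∧ phi1 T l t ≤ 1 := by
    intro t ht
    unfold phi1
    split_ifs with h
    · have h1 : 0 ≤ 1 - t / T := by rw [sub_nonneg]; exact (div_le_one hTpos).2 h
      exact ⟨Real.rpow_nonneg h1 _, Real.rpow_le_one h1 (by
        have : 0 < t / T := by positivity
        linarith) hlpos.le⟩
    · simp
  have hphi2 : ∀ x ∈ extDom N, 0 ≤ phi2 N α k R Ψ x := by
    intro x hx
    have hx : 1 ≤ ‖x‖ := hx
    unfold phi2 Hfun
    refine mul_nonneg ?_ (Real.rpow_nonneg (hΨrange _).1 _)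
    have h1 : ‖x‖ ^ ((2 : ℝ) - N) ≤ 1 := Real.rpow_le_one_of_one_le_of_nonpos hx (by linarith)
    have h2 : ((N : ℝ) - 2 + α) / α = ((N : ℝ) - 2) / α + 1 := by field_simp
    have h3 : 0 ≤ ((N : ℝ) - 2) / α := div_nonneg (by linarith) hα.le
    linarith
  have hstep : (∫ q in Ioi (0 : ℝ) ×ˢ extDom N,
          if phiTest N α l k T R Ψ q.1 q.2 = 0 then 0
          else (phiTest N α l k T R Ψ q.1 q.2) ^ (-(1 / (p - 1))) *
            |lap (fun y => phiTest N α l k T R Ψ q.1 y) q.2| ^ (p / (p - 1)))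
      ≤ ∫ q in Ioi (0 : ℝ) ×ˢ extDom N, G q.1 * F q.2 := by
    -- The left integrand need not be integrable for this comparison: its integral is then `0`.
    refine integral_mono_of_nonneg ?_ ?_ ?_
    · refine (ae_restrict_iff' (measurableSet_Ioi.prod hmeas)).2 (ae_of_all _ fun q hq0 => ?_)
      simp only [Pi.zero_apply]
      split_ifs
      · exact le_rfl
      · have : 0 ≤ phiTest N α l k T R Ψ q.1 q.2 :=
          mul_nonneg (hphi1 q.1 hq0.1).1 (hphi2 q.2 hq0.2)
        positivity
    · rw [hrest]
      exact hGi.mul_prod hFi.integrableOn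
    · refine (ae_restrict_iff' (measurableSet_Ioi.prod hmeas)).2 (ae_of_all _ fun q hq0 => ?_)
      have hGnn : 0 ≤ G q.1 := indicator_nonneg (fun _ _ => zero_le_one) _
      simp only []
      split_ifs with h0
      · exact mul_nonneg hGnn (hFnn _)
      · have hqT : q.1 ∈ Iic T := by
          by_contra h
          apply h0
          simp only [mem_Iic] at h
          simp [phiTest, phi1, h]
        rw [hq, hq', hG, indicator_of_mem hqT, one_mul]
        obtain ⟨hc0, hc1⟩ := hphi1 q.1 hq0.1
        exact hpt _ R hc0 hc1 hR q.2 hq0.2 h0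
  have hlogdiv : Real.log (R / √R) = Real.log R / 2 := by
    rw [Real.div_sqrt, Real.log_sqrt hRpos.le]
  calc _ ≤ ∫ q in Ioi (0 : ℝ) ×ˢ extDom N, G q.1 * F q.2 := hstep
    _ = T * ∫ x in extDom N, F x := by
        rw [hrest, integral_prod_mul, hGint]
    _ ≤ T * ∫ x, F x := by
        exact mul_le_mul_of_nonneg_left (setIntegral_le_integral hFi (ae_of_all _ hFnn)) hTpos.le
    _ = S * K * 2 ^ ((N : ℝ) / 2 - 1) * T * (Real.log R) ^ (1 - (N : ℝ) / 2) := by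
        have hpw : (Real.log R / 2) ^ (-((N : ℝ) / 2)) * (Real.log R / 2) =
            2 ^ ((N : ℝ) / 2 - 1) * (Real.log R) ^ (1 - (N : ℝ) / 2) := by
          rw [← Real.rpow_add_one (by positivity), Real.div_rpow (by positivity) (by norm_num),
            show (N : ℝ) / 2 - 1 = -(-((N : ℝ) / 2) + 1) by ring, Real.rpow_neg (by norm_num),
            show 1 - (N : ℝ) / 2 = -((N : ℝ) / 2) + 1 by ring]
          ring
        rw [hFint, hlogdiv, hM]
        linear_combination T * S * K * hpw
    _ ≤ _ := by
        gcongr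
        have : 0 ≤ (Real.log R) ^ (1 - (N : ℝ)) := by positivity
        linarith
end
end

section
/- Let N ≥ 3, α > 0, let 2-N < λ < 0 and p = (λ-2)/λ (equivalently p = 1 - 2/λ), and fix l > 2p/(p-1) and a C² function Ψ : [0,∞) → [0,1] with Ψ(s) = 1 for 0 ≤ s ≤ 1, Ψ nonincreasing on (1,2), and Ψ(s) = 0 for s ≥ 2. For T, R > 1 define ψ(t,x) = ψ₁(t) ψ₂(x) on Q = (0,∞) × {|x| ≥ 1}, where ψ₁(t) = (1-t/T)^l for 0 ≤ t ≤ T and 0 for t > T, ψ₂(x) = H(x) Ψ(|x|/R). Then there exists a constant C > 0, independent of T and R, such that for all sufficiently large T and R: 𝓙₁ := ∫_Q ψ^{-1/(p-1)} |ψ_t|^{p/(p-1)} dx dt ≤ C T^{λ/2} R^N (with the integrand interpreted as 0 where ψ vanishes). -/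
/-!
Put `q = p / (p - 1) = 1 - λ / 2`, so that `-1 / (p - 1) = λ / 2 = 1 - q`. Since `ψ = ψ₁ ψ₂` and
only `ψ₁` depends on time, the integrand at a point where `ψ > 0` equals
`ψ₂ ψ₁ ^ (1 - q) |∂ₜψ₁| ^ q = ψ₂ (l / T) ^ q (1 - t / T) ^ (l - q)`
(`integrand_eq`). As `l ≥ q` and `0 ≤ ψ₂ ≤ K := (N - 2 + α) / α`, it is at most `K (l / T) ^ q`;
it vanishes for `t ≥ T` and for `|x| ≥ 2 R` (`integrand_le`). Integrating this constant
over `(0, T] × closedBall 0 (2 R)` gives `K l ^ q T ^ (1 - q) (2 R) ^ N |B₁|`, with `1 - q = λ / 2`.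
-/

open MeasureTheory Real Set

noncomputable section

/-- The time factor `ψ₁(t) = (1-t/T)^l` for `0 ≤ t ≤ T`, extended by `0` for `t > T`. -/
noncomputable def psi1 (T l : ℝ) (t : ℝ) : ℝ := if t ≤ T then (1 - t / T) ^ l else 0

/-- The space factor `ψ₂(x) = H(x) Ψ(|x|/R)`. -/
noncomputable def psi2 (N : ℕ) (α R : ℝ) (Ψ : ℝ → ℝ) (x : Euc N) : ℝ :=
  Hfun N α x * Ψ (‖x‖ / R)

/-- The test function `ψ(t,x) = ψ₁(t) ψ₂(x)`. -/
noncomputable def psiTest (N : ℕ) (α l T R : ℝ) (Ψ : ℝ → ℝ) (t : ℝ) (x : Euc N) : ℝ :=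
  psi1 T l t * psi2 N α R Ψ x

lemma hasDerivAt_psi1 {T l t : ℝ} (hT : 0 < T) (ht : t < T) :
    HasDerivAt (psi1 T l) (-(l / T * (1 - t / T) ^ (l - 1))) t := by
  have hu : 0 < 1 - t / T := by
    rw [sub_pos, div_lt_one hT]; exact ht
  have h1 : HasDerivAt (fun s : ℝ => 1 - s / T) (-(1 / T)) t := by
    simpa using ((hasDerivAt_id t).div_const T).const_sub 1
  have h2 := h1.rpow_const (p := l) (Or.inl hu.ne')
  refine (h2.congr_of_eventuallyEq ?_).congr_deriv (by ring)
  filter_upwards [Iio_mem_nhds ht] with s hs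
  simp [psi1, le_of_lt (mem_Iio.mp hs)]

/-- The real-number identity behind the estimate, with `u = 1 - t / T` and `c = ψ₂(x)`: the powers
of `c` add up to `1` and those of `u` to `l (1 - q) + (l - 1) q = l - q`. -/
lemma integrand_eq {T l u c q : ℝ} (hT : 0 < T) (hl : 0 < l) (hu : 0 < u) (hc : 0 < c) :
    (u ^ l * c) ^ (1 - q) * |-(l / T * u ^ (l - 1)) * c| ^ q = c * (l / T) ^ q * u ^ (l - q) := by
  have hlT : 0 < l / T := div_pos hl hT
  have h1 : 0 < u ^ l := rpow_pos_of_pos hu _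
  have h2 : 0 < u ^ (l - 1) := rpow_pos_of_pos hu _
  rw [neg_mul, abs_neg, abs_of_pos (by positivity), mul_rpow h1.le hc.le,
    mul_rpow (by positivity) hc.le, mul_rpow hlT.le h2.le, ← rpow_mul hu.le, ← rpow_mul hu.le]
  have hcc : c ^ (1 - q) * c ^ q = c := by
    rw [← rpow_add hc]; simp
  have huu : u ^ (l * (1 - q)) * u ^ ((l - 1) * q) = u ^ (l - q) := by
    rw [← rpow_add hu]; congr 1; ring
  calc _ = (c ^ (1 - q) * c ^ q) * (l / T) ^ q * (u ^ (l * (1 - q)) * u ^ ((l - 1) * q)) := by ring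
    _ = _ := by rw [hcc, huu]

lemma Hfun_mem {N : ℕ} (hN : 3 ≤ N) {α : ℝ} (hα : 0 < α) {x : Euc N} (hx : 1 ≤ ‖x‖) :
    0 ≤ Hfun N α x ∧ Hfun N α x ≤ ((N : ℝ) - 2 + α) / α := by
  have hN' : (3 : ℝ) ≤ N := by exact_mod_cast hN
  have h1 : ‖x‖ ^ ((2 : ℝ) - N) ≤ 1 := rpow_le_one_of_one_le_of_nonpos hx (by linarith)
  have h0 : 0 ≤ ‖x‖ ^ ((2 : ℝ) - N) := by positivity
  have h2 : 1 ≤ ((N : ℝ) - 2 + α) / α := by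
    rw [le_div_iff₀ hα]; linarith
  unfold Hfun
  constructor <;> linarith

lemma psi2_mem {N : ℕ} (hN : 3 ≤ N) {α : ℝ} (hα : 0 < α) {R : ℝ} (hR : 0 < R) {Ψ : ℝ → ℝ}
    (hΨ : ∀ s : ℝ, 0 ≤ s → Ψ s ∈ Icc (0 : ℝ) 1) {x : Euc N} (hx : 1 ≤ ‖x‖) :
    0 ≤ psi2 N α R Ψ x ∧ psi2 N α R Ψ x ≤ ((N : ℝ) - 2 + α) / α := by
  obtain ⟨h0, h1⟩ := Hfun_mem hN hα hx
  obtain ⟨k0, k1⟩ := hΨ (‖x‖ / R) (by positivity)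
  exact ⟨mul_nonneg h0 k0, (mul_le_of_le_one_right h0 k1).trans h1⟩

/-- The integrand of `𝓙₁`, with the exponents `-1 / (p - 1)` and `p / (p - 1)` written
as `1 - q` and `q`. -/
def integrand (N : ℕ) (α l T R q : ℝ) (Ψ : ℝ → ℝ) (z : ℝ × Euc N) : ℝ :=
  if psiTest N α l T R Ψ z.1 z.2 = 0 then 0
  else (psiTest N α l T R Ψ z.1 z.2) ^ (1 - q) *
    |deriv (fun s => psiTest N α l T R Ψ s z.2) z.1| ^ q

/-- On `Q` the integrand is nonnegative, bounded by `K (l / T) ^ q`, and supported in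
`(0, T] × closedBall 0 (2 R)`. -/
lemma integrand_le {N : ℕ} (hN : 3 ≤ N) {α : ℝ} (hα : 0 < α) {l T R q : ℝ} (hT : 0 < T)
    (hR : 0 < R) (hl : 0 < l) (hql : q ≤ l) {Ψ : ℝ → ℝ}
    (hΨ : ∀ s : ℝ, 0 ≤ s → Ψ s ∈ Icc (0 : ℝ) 1) (hΨzero : ∀ s : ℝ, 2 ≤ s → Ψ s = 0)
    {z : ℝ × Euc N} (hz : z ∈ Ioi (0 : ℝ) ×ˢ extDom N) :
    0 ≤ integrand N α l T R q Ψ z ∧ integrand N α l T R q Ψ z ≤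
      (Ioc 0 T ×ˢ Metric.closedBall (0 : Euc N) (2 * R)).indicator
        (fun _ => ((N : ℝ) - 2 + α) / α * (l / T) ^ q) z := by
  obtain ⟨t, x⟩ := z
  obtain ⟨ht, hx⟩ := hz
  change 0 < t at ht
  change 1 ≤ ‖x‖ at hx
  obtain ⟨c0, cK⟩ := psi2_mem hN hα hR hΨ hx
  have hK : 0 ≤ ((N : ℝ) - 2 + α) / α := c0.trans cK
  have hlT : 0 < l / T := div_pos hl hT
  have hq : 0 ≤ (l / T) ^ q := rpow_nonneg hlT.le _
  by_cases h0 : psiTest N α l T R Ψ t x = 0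
  · simp only [integrand, h0, if_true, le_refl, true_and]
    exact indicator_nonneg (fun _ _ => mul_nonneg hK hq) _
  have hc : 0 < psi2 N α R Ψ x := c0.lt_of_ne fun h => h0 (by rw [psiTest, ← h, mul_zero])
  -- At `t = T` the value is `0 ^ l = 0`, because `l > 0`.
  have htT : t < T := by
    by_contra! h
    apply h0
    rcases h.eq_or_lt with h | h
    · subst h
      simp [psiTest, psi1, div_self hT.ne', zero_rpow hl.ne']
    · simp [psiTest, psi1, not_le.mpr h]
  have hxR : ‖x‖ ≤ 2 * R := by
    by_contra! h
    apply hc.ne'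
    rw [psi2, hΨzero _ (by rw [le_div_iff₀ hR]; exact h.le), mul_zero]
  have hu : 0 < 1 - t / T := by
    rw [sub_pos, div_lt_one hT]; exact htT
  have hu1 : 1 - t / T ≤ 1 := by
    have := div_pos ht hT
    linarith
  have hd : deriv (fun s => psiTest N α l T R Ψ s x) t =
      -(l / T * (1 - t / T) ^ (l - 1)) * psi2 N α R Ψ x :=
    ((hasDerivAt_psi1 hT htT).mul_const _).deriv
  have hval : integrand N α l T R q Ψ (t, x) =
      psi2 N α R Ψ x * (l / T) ^ q * (1 - t / T) ^ (l - q) := by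
    simp only [integrand]
    rw [if_neg h0, hd, ← integrand_eq hT hl hu hc, psiTest, psi1, if_pos htT.le]
  have hmem : (t, x) ∈ Ioc 0 T ×ˢ Metric.closedBall (0 : Euc N) (2 * R) :=
    ⟨⟨ht, htT.le⟩, by simpa using hxR⟩
  rw [indicator_of_mem hmem, hval]
  have hp0 : 0 ≤ (1 - t / T) ^ (l - q) := rpow_nonneg hu.le _
  have hp1 : (1 - t / T) ^ (l - q) ≤ 1 := rpow_le_one hu.le hu1 (by linarith)
  refine ⟨by positivity, ?_⟩
  calc _ ≤ psi2 N α R Ψ x * (l / T) ^ q := mul_le_of_le_one_right (by positivity) hp1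
    _ ≤ _ := by gcongr

/-- Capacity estimate
`𝓙₁ = ∫_Q ψ^{-1/(p-1)} |ψ_t|^{p/(p-1)} dx dt ≤ C T^{λ/2} R^N`
for the test function `ψ(t,x) = (1-t/T)^l H(x) Ψ(|x|/R)` with `p = (λ-2)/λ`,
with `C` independent of `T, R` and `T, R` sufficiently large. -/
theorem capacity_estimate_J1 (N : ℕ) (hN : 3 ≤ N) (α : ℝ) (hα : 0 < α)
    (lam : ℝ) (hlam₁ : 2 - (N : ℝ) < lam) (hlam₂ : lam < 0)
    (p : ℝ) (hp : p = (lam - 2) / lam)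
    (l : ℝ) (hl : 2 * p / (p - 1) < l)
    (Ψ : ℝ → ℝ) (hΨsmooth : ContDiff ℝ 2 Ψ)
    (hΨrange : ∀ s : ℝ, 0 ≤ s → Ψ s ∈ Icc (0 : ℝ) 1)
    (hΨone : ∀ s : ℝ, 0 ≤ s → s ≤ 1 → Ψ s = 1)
    (hΨanti : AntitoneOn Ψ (Icc (1 : ℝ) 2))
    (hΨzero : ∀ s : ℝ, 2 ≤ s → Ψ s = 0) :
    ∃ C > 0, ∃ T₀ R₀ : ℝ, 1 < T₀ ∧ 1 < R₀ ∧ ∀ T ≥ T₀, ∀ R ≥ R₀,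
      (∫ q in Ioi (0 : ℝ) ×ˢ extDom N,
          if psiTest N α l T R Ψ q.1 q.2 = 0 then 0
          else (psiTest N α l T R Ψ q.1 q.2) ^ (-(1 / (p - 1))) *
            |deriv (fun s => psiTest N α l T R Ψ s q.2) q.1| ^ (p / (p - 1)))
        ≤ C * T ^ (lam / 2) * R ^ (N : ℝ) := by
  have hN' : (3 : ℝ) ≤ N := by exact_mod_cast hN
  have hlam0 : lam ≠ 0 := hlam₂.ne
  obtain ⟨q, hq⟩ : ∃ q : ℝ, q = 1 - lam / 2 := ⟨_, rfl⟩
  have hp1 : p - 1 = -2 / lam := by rw [hp]; field_simp; ring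
  have he1 : -(1 / (p - 1)) = 1 - q := by rw [hp1, hq]; field_simp; ring
  have he2 : p / (p - 1) = q := by rw [hp1, hp, hq]; field_simp; ring
  rw [mul_div_assoc, he2] at hl
  have hq1 : 1 < q := by rw [hq]; linarith
  have hl0 : 0 < l := by linarith
  obtain ⟨K, hK⟩ : ∃ K : ℝ, K = ((N : ℝ) - 2 + α) / α := ⟨_, rfl⟩
  have hK0 : 0 < K := by rw [hK]; apply div_pos _ hα; linarith
  obtain ⟨V, hV⟩ : ∃ V : ℝ, V = volume.real (Metric.ball (0 : Euc N) 1) := ⟨_, rfl⟩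
  have : Nonempty (Fin N) := ⟨⟨0, by omega⟩⟩
  have hV0 : 0 < V := by
    rw [hV]
    exact ENNReal.toReal_pos (Metric.measure_ball_pos _ _ one_pos).ne' measure_ball_lt_top.ne
  refine ⟨K * l ^ q * 2 ^ N * V, by positivity, 2, 2, by norm_num, by norm_num, ?_⟩
  intro T hT R hR
  have hT0 : 0 < T := by linarith
  have hR0 : 0 < R := by linarith
  have hS : MeasurableSet (Ioc 0 T ×ˢ Metric.closedBall (0 : Euc N) (2 * R)) :=
    measurableSet_Ioc.prod Metric.isClosed_closedBall.measurableSet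
  have hfin : volume (Ioc 0 T ×ˢ Metric.closedBall (0 : Euc N) (2 * R)) ≠ ⊤ := by
    rw [Measure.volume_eq_prod, Measure.prod_prod]
    exact ENNReal.mul_ne_top measure_Ioc_lt_top.ne measure_closedBall_lt_top.ne
  have hQ : MeasurableSet (Ioi (0 : ℝ) ×ˢ extDom N) :=
    measurableSet_Ioi.prod (measurableSet_le measurable_const measurable_norm)
  have hint : Integrable ((Ioc 0 T ×ˢ Metric.closedBall (0 : Euc N) (2 * R)).indicator
      (fun _ => K * (l / T) ^ q)) :=
    (integrable_indicator_iff hS).2 (integrableOn_const hfin)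
  have hvol : volume.real (Metric.closedBall (0 : Euc N) (2 * R)) = (2 * R) ^ N * V := by
    rw [hV, Measure.real, Measure.addHaar_closedBall _ _ (by positivity), ENNReal.toReal_mul,
      ENNReal.toReal_ofReal (by positivity), finrank_euclideanSpace_fin, Measure.real]
  rw [he1, he2]
  have hle := fun z (hz : z ∈ Ioi (0 : ℝ) ×ˢ extDom N) =>
    integrand_le hN hα hT0 hR0 hl0 (by linarith : q ≤ l) hΨrange hΨzero hz
  rw [← hK] at hle
  -- Only the majorant has to be integrable: the integrand is nonnegative on `Q`.
  calc ∫ z in Ioi (0 : ℝ) ×ˢ extDom N, integrand N α l T R q Ψ z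
      ≤ ∫ z in Ioi (0 : ℝ) ×ˢ extDom N,
          (Ioc 0 T ×ˢ Metric.closedBall (0 : Euc N) (2 * R)).indicator
            (fun _ => K * (l / T) ^ q) z :=
        integral_mono_of_nonneg
          ((ae_restrict_iff' hQ).2 (.of_forall fun z hz => (hle z hz).1)) hint.integrableOn
          ((ae_restrict_iff' hQ).2 (.of_forall fun z hz => (hle z hz).2))
    _ ≤ ∫ z, (Ioc 0 T ×ˢ Metric.closedBall (0 : Euc N) (2 * R)).indicator
            (fun _ => K * (l / T) ^ q) z :=
        setIntegral_le_integral hint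
          (.of_forall fun z => indicator_nonneg (fun _ _ => by positivity) z)
    _ = T * ((2 * R) ^ N * V) * (K * (l / T) ^ q) := by
        rw [integral_indicator_const _ hS, Measure.volume_eq_prod, measureReal_prod_prod, hvol,
          Real.volume_real_Ioc_of_le hT0.le, sub_zero, smul_eq_mul]
    _ = K * l ^ q * 2 ^ N * V * T ^ (lam / 2) * R ^ (N : ℝ) := by
        have hTq : T ^ (lam / 2) = T / T ^ q := by
          rw [show lam / 2 = 1 - q by rw [hq]; ring, rpow_sub hT0, rpow_one]
        rw [rpow_natCast, hTq, div_rpow hl0.le hT0.le, mul_pow]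
        ring
end
end
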